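/- arXiv:0706.3451 — 3 statements merged into one kernel-verified Lean document; each statement's English description precedes it below -/
import Mathlib

section
/- Let (A, 𝔪, k) be a commutative Noetherian local ring, let M be a finitely generated A-module having reducible complexity, and let t be a natural number. If for every finitely generated A-module N having reducible complexity with cx N = t one has Ext^i_A(M,N) = 0 for all i ≫ 0, then cx M < t. In particular, M has finite projective dimension if and only if Ext^i_A(M,N) = 0 for every N of reducible complexity with cx N = 1 and all i ≫ 0. -/
open CategoryTheory Opposite Filter IsLocalRing

universe u

namespace ComplexityTest

variable (A : Type u) [CommRing A] [IsLocalRing A]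

structure MinFreeRes (M : Type u) [AddCommGroup M] [Module A M] : Type u where
  b : ℕ → ℕ
  d : (n : ℕ) → ((Fin (b (n + 1)) → A) →ₗ[A] (Fin (b n) → A))
  aug : (Fin (b 0) → A) →ₗ[A] M
  aug_surjective : Function.Surjective aug
  exact_zero : Function.Exact (d 0) aug
  exact_succ : ∀ n, Function.Exact (d (n + 1)) (d n)
  minimal : ∀ n x i, d n x i ∈ maximalIdeal A

variable (M : Type u) [AddCommGroup M] [Module A M]

def HasComplexityLE (t : ℕ) : Prop :=
  ∃ (R : MinFreeRes A M) (a : ℝ), ∀ᶠ n : ℕ in atTop, (R.b n : ℝ) ≤ a * (n : ℝ) ^ ((t : ℤ) - 1)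

noncomputable def complexity : ℕ∞ :=
  sInf {c : ℕ∞ | ∃ t : ℕ, c = t ∧ HasComplexityLE A M t}

def HasProjDimLE (t : ℕ) : Prop :=
  ∃ R : MinFreeRes A M, ∀ i, t < i → R.b i = 0

noncomputable def projDim : ℕ∞ :=
  sInf {c : ℕ∞ | ∃ t : ℕ, c = t ∧ HasProjDimLE A M t}

def HasFiniteProjDim : Prop :=
  ∃ t : ℕ, HasProjDimLE A M t

def IsSyzygyOf (S : Type u) [AddCommGroup S] [Module A S] : ℕ → Prop
  | 0 => Nonempty (S ≃ₗ[A] M)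
  | 1 => ∃ R : MinFreeRes A M, Nonempty (S ≃ₗ[A] (LinearMap.ker R.aug))
  | (n + 2) => ∃ R : MinFreeRes A M, Nonempty (S ≃ₗ[A] (LinearMap.ker (R.d n)))

variable {A M} in
def IsSES {K S : Type u} [AddCommGroup K] [Module A K] [AddCommGroup S] [Module A S]
    (f : M →ₗ[A] K) (g : K →ₗ[A] S) : Prop :=
  Function.Injective f ∧ Function.Exact f g ∧ Function.Surjective g

noncomputable def extModule (n : ℕ) (N : Type u) [AddCommGroup N] [Module A N] :
    ModuleCat A :=
  ((_root_.Ext A (ModuleCat.{u} A) n).obj (op (ModuleCat.of A M))).obj (ModuleCat.of A N)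

def extVanish (n : ℕ) (N : Type u) [AddCommGroup N] [Module A N] : Prop :=
  Subsingleton (extModule A M n N)

/-- The `n`-th Tor module `Tor^A_n(M, N)`. -/
noncomputable def torModule (n : ℕ) (N : Type u) [AddCommGroup N] [Module A N] :
    ModuleCat A :=
  ((Tor (ModuleCat.{u} A) n).obj (ModuleCat.of A M)).obj (ModuleCat.of A N)

/-- The vanishing `Tor^A_n(M, N) = 0`. -/
def torVanish (n : ℕ) (N : Type u) [AddCommGroup N] [Module A N] : Prop :=
  Subsingleton (torModule A M n N)

noncomputable def depth : ℕ∞ :=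
  sInf {c : ℕ∞ | ∃ i : ℕ, c = i ∧ ¬ extVanish A (ResidueField A) i M}

variable {A}

/-- The category of modules of *free reducible complexity* over the local ring `A`.
It is defined inductively: every finitely generated module of finite projective
dimension has free reducible complexity, and a finitely generated module `M` of finite
positive complexity has free reducible complexity provided there is a short exact
sequence `0 → M → K → Ω^n_A(M) → 0` (necessarily induced by a cohomology element
`η ∈ Ext^{n+1}_A(M,M)`) where `K` is a finitely generated module of free reducible
complexity with `cx K = cx M - 1`. -/
inductive HasFreeRedCxCat : ModuleCat.{u} A → Prop
  | of_finite_projDim (M : ModuleCat.{u} A) (hfg : Module.Finite A M)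
      (h : HasFiniteProjDim A M) : HasFreeRedCxCat M
  | step (M K S : ModuleCat.{u} A) (n : ℕ)
      (hfg : Module.Finite A M) (hKfg : Module.Finite A K)
      (hpos : 0 < complexity A M) (hfin : complexity A M ≠ ⊤)
      (hsyz : IsSyzygyOf A M S n)
      (f : M →ₗ[A] K) (g : K →ₗ[A] S) (hses : IsSES f g)
      (hcx : complexity A K = complexity A M - 1)
      (hK : HasFreeRedCxCat K) : HasFreeRedCxCat M

/-- The category of modules of *reducible complexity* over the local ring `A`: as for
free reducible complexity, but where in addition the reductions are required to
preserve depth. -/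
inductive HasRedCxCat : ModuleCat.{u} A → Prop
  | of_finite_projDim (M : ModuleCat.{u} A) (hfg : Module.Finite A M)
      (h : HasFiniteProjDim A M) : HasRedCxCat M
  | step (M K S : ModuleCat.{u} A) (n : ℕ)
      (hfg : Module.Finite A M) (hKfg : Module.Finite A K)
      (hpos : 0 < complexity A M) (hfin : complexity A M ≠ ⊤)
      (hsyz : IsSyzygyOf A M S n)
      (f : M →ₗ[A] K) (g : K →ₗ[A] S) (hses : IsSES f g)
      (hcx : complexity A K = complexity A M - 1)
      (hdepth : depth A K = depth A M)
      (hK : HasRedCxCat K) : HasRedCxCat M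

variable (A)

/-- `M` has free reducible complexity. -/
def HasFreeRedCx (M : Type u) [AddCommGroup M] [Module A M] : Prop :=
  HasFreeRedCxCat (ModuleCat.of A M)

/-- `M` has reducible complexity. -/
def HasRedCx (M : Type u) [AddCommGroup M] [Module A M] : Prop :=
  HasRedCxCat (ModuleCat.of A M)

/-- A Noetherian local ring is Gorenstein if it has finite injective dimension over
itself; by Bass' characterization, this is equivalent to the vanishing of
`Ext^i_A(k, A)` for all sufficiently large `i`. -/
def IsGorenstein : Prop :=
  ∃ n : ℕ, ∀ i : ℕ, n < i → extVanish A (ResidueField A) i A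

end ComplexityTest

open ComplexityTest

/-!
A reduction `0 ⟶ M ⟶ K ⟶ Ω^n(M) ⟶ 0` represents `η = θ · δ ∈ Ext^(n+1)(M, M)`, where `δ` is the
class of the sequence and `θ ∈ Ext^n(M, Ω^n(M))` is the class of the truncated minimal resolution,
multiplication by which is an isomorphism on `Ext` in positive degrees. Hence the kernel of `η` on
`Ext(M, k)` is a quotient of `Ext(K, k)`. If `Ext^i(M, M) = 0` for large `i`, some power `η ^ j`
vanishes, so filtering `Ext(M, k)` by the kernels of the powers of `η` bounds each Betti number of
`M` by a sum of `j` shifted Betti numbers of `K`, and `cx M ≤ cx K`.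

Now induct along the reductions of `M`. The sequence carries the hypothesis from `M` over to `K`,
so `cx M - 1 = cx K < t` by induction and `cx M ≤ t`. If `cx M = t`, then `N = M` is allowed in the
hypothesis, whence `t = cx M ≤ cx K < t`, which is absurd.
-/

namespace ComplexityTest

section Length

variable {R : Type*} [Ring R] {U V W Q : Type*} [AddCommGroup U] [Module R U]
  [AddCommGroup V] [Module R V] [AddCommGroup W] [Module R W] [AddCommGroup Q] [Module R Q]

lemma length_ker_comp_le (f : U →ₗ[R] V) (g : V →ₗ[R] W) :
    Module.length R (LinearMap.ker (g ∘ₗ f)) ≤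
      Module.length R (LinearMap.ker f) + Module.length R (LinearMap.ker g) := by
  let φ : LinearMap.ker (g ∘ₗ f) →ₗ[R] LinearMap.ker g := f.restrict fun _ hx ↦ hx
  have ker_φ_le : Module.length R (LinearMap.ker φ) ≤ Module.length R (LinearMap.ker f) := by
    let ψ : LinearMap.ker φ →ₗ[R] LinearMap.ker f :=
      ((LinearMap.ker (g ∘ₗ f)).subtype.restrict fun _ hx ↦ congrArg Subtype.val hx)
    exact Module.length_le_of_injective ψ fun _ _ h ↦
      Subtype.ext (Subtype.ext (congrArg (fun z : LinearMap.ker f ↦ (z : U)) h))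
  have range_φ_le : Module.length R (LinearMap.range φ) ≤ Module.length R (LinearMap.ker g) :=
    Module.length_le_of_injective _ (Submodule.subtype_injective _)
  have exact_φ : Function.Exact (LinearMap.ker φ).subtype φ.rangeRestrict := by
    rw [LinearMap.exact_iff, LinearMap.ker_rangeRestrict, Submodule.range_subtype]
  rw [Module.length_eq_add_of_exact (LinearMap.ker φ).subtype φ.rangeRestrict
    (Submodule.subtype_injective _) φ.surjective_rangeRestrict exact_φ]
  exact add_le_add ker_φ_le range_φ_le

lemma length_le_of_le_range {p : Submodule R V} {h : Q →ₗ[R] V} (hp : p ≤ LinearMap.range h) :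
    Module.length R p ≤ Module.length R Q :=
  (Module.length_le_of_injective (Submodule.inclusion hp) (Submodule.inclusion_injective hp)).trans
    (Module.length_le_of_surjective h.rangeRestrict h.surjective_rangeRestrict)

end Length

section Ext

universe v w

variable {C : Type*} [Category.{v} C] [Abelian C] [HasExt.{w} C]

lemma precomp_extClass_injective {S : ShortComplex C} (hS : S.ShortExact) {Y : C} {i m : ℕ}
    (him : 1 + i = m)
    (h : ∀ x : Abelian.Ext S.X₂ Y i, (Abelian.Ext.mk₀ S.f).comp x (zero_add i) = 0) :
    Function.Injective (hS.extClass.precomp Y him) := by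
  rw [injective_iff_map_eq_zero]
  intro x hx
  obtain ⟨y, rfl⟩ := Abelian.Ext.contravariant_sequence_exact₁ hS Y x him hx
  exact h y

lemma subsingleton_ext_of_shortExact {S : ShortComplex C} (hS : S.ShortExact) {Y : C} {i : ℕ}
    (h₁ : Subsingleton (Abelian.Ext S.X₁ Y i)) (h₃ : Subsingleton (Abelian.Ext S.X₃ Y i)) :
    Subsingleton (Abelian.Ext S.X₂ Y i) := by
  refine subsingleton_of_forall_eq 0 fun x ↦ ?_
  obtain ⟨y, rfl⟩ := Abelian.Ext.contravariant_sequence_exact₂ hS Y x (Subsingleton.elim _ _)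
  rw [Subsingleton.elim y 0, Abelian.Ext.comp_zero]

/-- The `j`-th power of `η ∈ Ext^c(X, X)` in the Yoneda algebra of `X`. The degree is written
`c * j` because `c * 0` and `c * (j + 1)` reduce definitionally to `0` and `c * j + c`. -/
noncomputable def extPow {X : C} {c : ℕ} (η : Abelian.Ext X X c) :
    (j : ℕ) → Abelian.Ext X X (c * j)
  | 0 => Abelian.Ext.mk₀ (𝟙 X)
  | j + 1 => (extPow η j).comp η rfl

variable (k : Type*) [CommRing k] [Linear k C]

lemma length_ker_precomp_extPow_le {X : C} {c : ℕ} (η : Abelian.Ext X X c) (Y : C) (j : ℕ)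
    {i m : ℕ} (h : c * j + i = m) :
    Module.length k (LinearMap.ker ((extPow η j).precompOfLinear k Y h)) ≤
      ∑ l ∈ Finset.range j,
        Module.length k (LinearMap.ker (η.precompOfLinear k Y (rfl : c + (c * l + i) = _))) := by
  induction j generalizing i with
  | zero =>
    obtain rfl : i = m := by simpa using h
    have ker_eq_bot : LinearMap.ker ((extPow η 0).precompOfLinear k Y h) = ⊥ :=
      LinearMap.ker_eq_bot'.2 fun x hx ↦ (Abelian.Ext.mk₀_id_comp x).symm.trans hx
    rw [ker_eq_bot, Module.length_bot]
    exact zero_le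
  | succ j ih =>
    have h' : c * j + (c + i) = m := by rw [← h, mul_add_one, add_assoc]
    let κ (d : ℕ) : ℕ∞ :=
      Module.length k (LinearMap.ker (η.precompOfLinear k Y (rfl : c + d = c + d)))
    have precomp_succ : (extPow η (j + 1)).precompOfLinear k Y h =
        (extPow η j).precompOfLinear k Y h' ∘ₗ η.precompOfLinear k Y rfl :=
      LinearMap.ext fun x ↦ Abelian.Ext.comp_assoc (extPow η j) η x rfl rfl (by lia)
    calc Module.length k (LinearMap.ker ((extPow η (j + 1)).precompOfLinear k Y h))
        ≤ κ i + ∑ l ∈ Finset.range j, κ (c * l + (c + i)) := by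
          rw [precomp_succ]
          exact (length_ker_comp_le _ _).trans (by gcongr; exact ih h')
      _ = ∑ l ∈ Finset.range (j + 1), κ (c * l + i) := by
          rw [Finset.sum_range_succ', add_comm]
          congr 1
          · exact Finset.sum_congr rfl fun l _ ↦ congrArg κ (by ring)
          · exact congrArg κ (by ring)

lemma length_ext_le_of_extPow_eq_zero {X : C} {c j : ℕ} {η : Abelian.Ext X X c}
    (hη : extPow η j = 0) (Y : C) (i : ℕ) :
    Module.length k (Abelian.Ext X Y i) ≤
      ∑ l ∈ Finset.range j,
        Module.length k (LinearMap.ker (η.precompOfLinear k Y (rfl : c + (c * l + i) = _))) := by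
  have ker_eq_top : LinearMap.ker ((extPow η j).precompOfLinear k Y rfl) =
      (⊤ : Submodule k (Abelian.Ext X Y i)) := by
    rw [hη]
    exact LinearMap.ker_eq_top.2 (map_zero _)
  have := length_ker_precomp_extPow_le k η Y j (rfl : c * j + i = _)
  rwa [ker_eq_top, Module.length_top] at this

end Ext

section ExtVanish

variable {A : Type u} [CommRing A]
  (M N : Type u) [AddCommGroup M] [Module A M] [AddCommGroup N] [Module A N]

-- Both sides say that the cochain complex `Hom(P, N)`, for a projective resolution `P` of `M`,
-- is exact in degree `p + 1`.
lemma extVanish_succ_iff (p : ℕ) :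
    extVanish A M (p + 1) N ↔
      Subsingleton (Abelian.Ext (ModuleCat.of A M) (ModuleCat.of A N) (p + 1)) := by
  let P := projectiveResolution (ModuleCat.of A M)
  have extVanish_iff_exact : extVanish A M (p + 1) N ↔
      ∀ f : P.complex.X (p + 1) ⟶ ModuleCat.of A N, P.complex.d (p + 2) (p + 1) ≫ f = 0 →
        ∃ g : P.complex.X p ⟶ ModuleCat.of A N, P.complex.d (p + 1) p ≫ g = f := by
    unfold extVanish extModule
    rw [← ModuleCat.isZero_iff_subsingleton,
      Iso.isZero_iff (P.isoExt (R := A) (p + 1) (ModuleCat.of A N)),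
      ← HomologicalComplex.exactAt_iff_isZero_homology,
      HomologicalComplex.exactAt_iff' _ p (p + 1) (p + 2) (by simp) (by simp),
      ShortComplex.moduleCat_exact_iff]
    rfl
  rw [extVanish_iff_exact]
  constructor
  · intro h
    refine subsingleton_of_forall_eq 0 fun x ↦ ?_
    obtain ⟨f, hf, rfl⟩ := P.extMk_surjective x (p + 2) rfl
    exact (P.extMk_eq_zero_iff f (p + 2) rfl hf p rfl).2 (h f hf)
  · intro h f hf
    exact (P.extMk_eq_zero_iff f (p + 2) rfl hf p rfl).1 (Subsingleton.elim _ _)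

lemma eventually_extVanish_iff :
    (∀ᶠ i in atTop, extVanish A M i N) ↔
      ∀ᶠ i in atTop, Subsingleton (Abelian.Ext (ModuleCat.of A M) (ModuleCat.of A N) i) := by
  refine eventually_congr ((eventually_gt_atTop 0).mono fun i hi ↦ ?_)
  obtain ⟨p, rfl⟩ := Nat.exists_eq_succ_of_ne_zero hi.ne'
  exact extVanish_succ_iff M N p

end ExtVanish

section ResidueField

variable {A : Type*} [CommRing A] [IsLocalRing A]

lemma apply_eq_zero_of_forall_mem_maximalIdeal {ι : Type*} [Finite ι]
    (φ : (ι → A) →ₗ[A] ResidueField A) {v : ι → A} (hv : ∀ i, v i ∈ maximalIdeal A) :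
    φ v = 0 := by
  classical
  have := Fintype.ofFinite ι
  rw [LinearMap.pi_apply_eq_sum_univ φ v]
  refine Finset.sum_eq_zero fun i _ ↦ ?_
  rw [Algebra.smul_def, ResidueField.algebraMap_eq, (residue_eq_zero_iff _).2 (hv i), zero_mul]

lemma length_linearMap_residueField (ι : Type*) [Finite ι] :
    Module.length A ((ι → A) →ₗ[A] ResidueField A) = ENat.card ι := by
  classical
  have := Fintype.ofFinite ι
  have : IsSimpleModule A (ResidueField A) :=
    isSimpleModule_iff_isCoatom.2 (maximalIdeal.isMaximal A).out
  rw [← ((Pi.basisFun A ι).constr A).length_eq, Module.length_pi, Module.length_eq_one, mul_one]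

end ResidueField

namespace MinFreeRes

variable {A : Type u} [CommRing A] [IsLocalRing A] {M : Type u} [AddCommGroup M] [Module A M]
  (R : MinFreeRes A M)

/-- The free module in degree `n` of a minimal free resolution, as an object of `ModuleCat A`. -/
abbrev free (n : ℕ) : ModuleCat.{u} A := ModuleCat.of A (Fin (R.b n) → A)

/-- The `n`-th syzygy `Ω^n(M)` of a minimal free resolution of `M`. For positive `n` it is the
image of a differential, hence by exactness the kernel used in `IsSyzygyOf`. -/
def syzygy : ℕ → ModuleCat.{u} A
  | 0 => ModuleCat.of A M
  | n + 1 => ModuleCat.of A (LinearMap.range (R.d n))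

/-- The inclusion `Ω^(n+1)(M) ⟶ F_n`. -/
def syzygyIncl (n : ℕ) : R.syzygy (n + 1) ⟶ R.free n :=
  ModuleCat.ofHom (LinearMap.range (R.d n)).subtype

/-- The free cover `F_n ⟶ Ω^n(M)`. -/
def syzygyCover : (n : ℕ) → (R.free n ⟶ R.syzygy n)
  | 0 => ModuleCat.ofHom R.aug
  | n + 1 => ModuleCat.ofHom (R.d n).rangeRestrict

lemma exact_syzygyIncl_syzygyCover (n : ℕ) :
    Function.Exact (R.syzygyIncl n) (R.syzygyCover n) := by
  rw [LinearMap.exact_iff]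
  cases n with
  | zero =>
    change LinearMap.ker R.aug = LinearMap.range (LinearMap.range (R.d 0)).subtype
    rw [Submodule.range_subtype, (LinearMap.exact_iff.1 R.exact_zero)]
  | succ n =>
    change LinearMap.ker (R.d n).rangeRestrict =
      LinearMap.range (LinearMap.range (R.d (n + 1))).subtype
    rw [Submodule.range_subtype, LinearMap.ker_rangeRestrict,
      (LinearMap.exact_iff.1 (R.exact_succ n))]

lemma syzygyCover_surjective : ∀ n : ℕ, Function.Surjective (R.syzygyCover n)
  | 0 => R.aug_surjective
  | n + 1 => (R.d n).surjective_rangeRestrict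

/-- The short exact sequence `0 ⟶ Ω^(n+1)(M) ⟶ F_n ⟶ Ω^n(M) ⟶ 0`. -/
abbrev syzygySequence (n : ℕ) : ShortComplex (ModuleCat.{u} A) where
  f := R.syzygyIncl n
  g := R.syzygyCover n
  zero := ModuleCat.hom_ext (R.exact_syzygyIncl_syzygyCover n).linearMap_comp_eq_zero

lemma shortExact_syzygySequence (n : ℕ) : (R.syzygySequence n).ShortExact :=
  ModuleCat.shortComplex_shortExact _ (R.exact_syzygyIncl_syzygyCover n)
    (Submodule.subtype_injective _) (R.syzygyCover_surjective n)

/-- The class in `Ext^n(M, Ω^n(M))` of the truncated resolution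
`0 ⟶ Ω^n(M) ⟶ F_(n-1) ⟶ ⋯ ⟶ F_0 ⟶ M ⟶ 0`; multiplication by it is dimension shifting. -/
noncomputable def syzygyClass : (n : ℕ) → Abelian.Ext (ModuleCat.of A M) (R.syzygy n) n
  | 0 => Abelian.Ext.mk₀ (𝟙 _)
  | n + 1 => (syzygyClass n).comp (R.shortExact_syzygySequence n).extClass rfl

lemma syzygyClass_succ_comp {Y : ModuleCat.{u} A} {n i m : ℕ} (h : n + 1 + i = m)
    (x : Abelian.Ext (R.syzygy (n + 1)) Y i) :
    (R.syzygyClass (n + 1)).comp x h =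
      (R.syzygyClass n).comp ((R.shortExact_syzygySequence n).extClass.comp x (add_comm 1 i))
        (by lia) :=
  Abelian.Ext.comp_assoc _ _ _ rfl _ (by lia)

lemma precomp_syzygyClass_surjective (Y : ModuleCat.{u} A) {n i m : ℕ} (h : n + i = m) :
    Function.Surjective ((R.syzygyClass n).precomp Y h) := by
  intro y
  induction n generalizing i with
  | zero =>
    obtain rfl : i = m := by lia
    exact ⟨y, Abelian.Ext.mk₀_id_comp y⟩
  | succ n ih =>
    obtain ⟨x, rfl⟩ := ih (i := i + 1) (by lia)
    obtain ⟨z, rfl⟩ :=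
      precomp_extClass_surjective_of_projective_X₂ Y (R.shortExact_syzygySequence n) i x
    exact ⟨z, R.syzygyClass_succ_comp h z⟩

lemma precomp_syzygyClass_zero_injective (Y : ModuleCat.{u} A) {i m : ℕ} (h : 0 + i = m) :
    Function.Injective ((R.syzygyClass 0).precomp Y h) := by
  obtain rfl : i = m := by lia
  intro x y hxy
  exact (Abelian.Ext.mk₀_id_comp x).symm.trans (hxy.trans (Abelian.Ext.mk₀_id_comp y))

lemma precomp_syzygyClass_succ_injective {Y : ModuleCat.{u} A} {n i m : ℕ} (h : n + 1 + i = m)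
    (hn : Function.Injective ((R.syzygyClass n).precomp Y (by lia : n + (i + 1) = m)))
    (hY : ∀ x : Abelian.Ext (R.free n) Y i,
      (Abelian.Ext.mk₀ (R.syzygyIncl n)).comp x (zero_add i) = 0) :
    Function.Injective ((R.syzygyClass (n + 1)).precomp Y h) := by
  have hδ := precomp_extClass_injective (R.shortExact_syzygySequence n) (add_comm 1 i) hY
  intro x y hxy
  exact hδ (hn ((R.syzygyClass_succ_comp h x).symm.trans
    (hxy.trans (R.syzygyClass_succ_comp h y))))

lemma precomp_syzygyClass_injective (Y : ModuleCat.{u} A) {n i m : ℕ} (hi : 0 < i)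
    (h : n + i = m) :
    Function.Injective ((R.syzygyClass n).precomp Y h) := by
  induction n generalizing i with
  | zero => exact R.precomp_syzygyClass_zero_injective Y h
  | succ n ih =>
    refine R.precomp_syzygyClass_succ_injective h (ih i.succ_pos _) fun x ↦ ?_
    obtain ⟨i, rfl⟩ := Nat.exists_eq_succ_of_ne_zero hi.ne'
    rw [Abelian.Ext.eq_zero_of_projective x, Abelian.Ext.comp_zero]

lemma subsingleton_ext_syzygy {Y : ModuleCat.{u} A} {n i : ℕ} (hi : 0 < i)
    (_ : Subsingleton (Abelian.Ext (ModuleCat.of A M) Y (n + i))) :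
    Subsingleton (Abelian.Ext (R.syzygy n) Y i) :=
  (R.precomp_syzygyClass_injective Y hi rfl).subsingleton

lemma subsingleton_ext_of_b_eq_zero {n : ℕ} (hn : R.b n = 0) (Y : ModuleCat.{u} A) :
    Subsingleton (Abelian.Ext (ModuleCat.of A M) Y n) := by
  have : IsEmpty (Fin (R.b n)) := by rw [hn]; infer_instance
  have : Subsingleton (R.syzygy n) := (R.syzygyCover_surjective n).subsingleton
  have : Subsingleton (R.syzygy n ⟶ Y) := ⟨(ModuleCat.isZero_of_subsingleton _).eq_of_src⟩
  have : Subsingleton (Abelian.Ext (R.syzygy n) Y 0) :=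
    Abelian.Ext.homEquiv₀.injective.subsingleton
  exact (R.precomp_syzygyClass_surjective Y (add_zero n)).subsingleton

lemma mk₀_syzygyIncl_comp_eq_zero {n : ℕ}
    (x : Abelian.Ext (R.free n) (ModuleCat.of A (ResidueField A)) 0) :
    (Abelian.Ext.mk₀ (R.syzygyIncl n)).comp x (zero_add 0) = 0 := by
  obtain ⟨φ, rfl⟩ := (Abelian.Ext.mk₀_bijective _ _).2 x
  rw [Abelian.Ext.mk₀_comp_mk₀, Abelian.Ext.mk₀_eq_zero_iff]
  ext ⟨_, y, rfl⟩
  exact apply_eq_zero_of_forall_mem_maximalIdeal φ.hom (R.minimal n y)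

lemma precomp_syzygyClass_residueField_bijective (n : ℕ) :
    Function.Bijective
      ((R.syzygyClass n).precomp (ModuleCat.of A (ResidueField A)) (add_zero n)) := by
  refine ⟨?_, R.precomp_syzygyClass_surjective _ _⟩
  cases n with
  | zero => exact R.precomp_syzygyClass_zero_injective _ _
  | succ n =>
    exact R.precomp_syzygyClass_succ_injective _ (R.precomp_syzygyClass_injective _ one_pos _)
      R.mk₀_syzygyIncl_comp_eq_zero

lemma precomp_syzygyCover_residueField_bijective (n : ℕ) :
    Function.Bijective ((Abelian.Ext.mk₀ (R.syzygyCover n)).precomp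
      (ModuleCat.of A (ResidueField A)) (zero_add 0)) := by
  have hS := R.shortExact_syzygySequence n
  have : Epi (R.syzygyCover n) := hS.epi_g
  exact ⟨Abelian.Ext.precomp_mk₀_injective_of_epi _ _, fun x ↦
    Abelian.Ext.contravariant_sequence_exact₂ hS _ x (R.mk₀_syzygyIncl_comp_eq_zero x)⟩

theorem length_ext_residueField (n : ℕ) :
    Module.length A (Abelian.Ext (ModuleCat.of A M) (ModuleCat.of A (ResidueField A)) n) =
      R.b n := by
  let k := ModuleCat.of A (ResidueField A)
  let shift : Abelian.Ext (R.syzygy n) k 0 ≃ₗ[A] Abelian.Ext (ModuleCat.of A M) k n :=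
    .ofBijective ((R.syzygyClass n).precompOfLinear A k (add_zero n))
      (R.precomp_syzygyClass_residueField_bijective n)
  let cover : Abelian.Ext (R.syzygy n) k 0 ≃ₗ[A] Abelian.Ext (R.free n) k 0 :=
    .ofBijective ((Abelian.Ext.mk₀ (R.syzygyCover n)).precompOfLinear A k (zero_add 0))
      (R.precomp_syzygyCover_residueField_bijective n)
  let hom : Abelian.Ext (R.free n) k 0 ≃ₗ[A] ((Fin (R.b n) → A) →ₗ[A] ResidueField A) :=
    Abelian.Ext.linearEquiv₀.trans ModuleCat.homLinearEquiv
  rw [← shift.length_eq, cover.length_eq, hom.length_eq, length_linearMap_residueField,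
    ENat.card_eq_coe_fintype_card, Fintype.card_fin]

end MinFreeRes

section Complexity

open Asymptotics

variable {A : Type u} [CommRing A] [IsLocalRing A] {M : Type u} [AddCommGroup M] [Module A M]

lemma hasComplexityLE_iff_isBigO {t : ℕ} :
    HasComplexityLE A M t ↔
      ∃ R : MinFreeRes A M,
        (fun n ↦ (R.b n : ℝ)) =O[atTop] fun n : ℕ ↦ (n : ℝ) ^ ((t : ℤ) - 1) := by
  refine exists_congr fun R ↦ ?_
  rw [isBigO_iff]
  refine exists_congr fun a ↦ eventually_congr (.of_forall fun n ↦ ?_)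
  rw [Real.norm_of_nonneg (by positivity), Real.norm_of_nonneg (by positivity)]

lemma hasComplexityLE_of_complexity_eq {t : ℕ} (h : complexity A M = t) :
    HasComplexityLE A M t := by
  have nonempty : {c : ℕ∞ | ∃ t : ℕ, c = t ∧ HasComplexityLE A M t}.Nonempty := by
    by_contra! hempty
    rw [complexity, hempty, sInf_empty] at h
    exact ENat.top_ne_natCast t h
  obtain ⟨s, hs, hle⟩ := csInf_mem nonempty
  rwa [← ENat.natCast_inj.1 (hs.symm.trans h)]

lemma nonempty_minFreeRes_of_complexity_ne_top (h : complexity A M ≠ ⊤) :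
    Nonempty (MinFreeRes A M) := by
  obtain ⟨t, ht⟩ := ENat.ne_top_iff_exists.1 h
  obtain ⟨R, -⟩ := hasComplexityLE_of_complexity_eq ht.symm
  exact ⟨R⟩

lemma hasFiniteProjDim_iff_eventually_b_eq_zero :
    HasFiniteProjDim A M ↔ ∃ R : MinFreeRes A M, ∀ᶠ n in atTop, R.b n = 0 := by
  constructor
  · rintro ⟨t, R, hR⟩
    exact ⟨R, (eventually_gt_atTop t).mono hR⟩
  · rintro ⟨R, hR⟩
    obtain ⟨t, ht⟩ := eventually_atTop.1 hR
    exact ⟨t, R, fun i hi ↦ ht i hi.le⟩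

theorem complexity_eq_zero_iff : complexity A M = 0 ↔ HasFiniteProjDim A M := by
  rw [hasFiniteProjDim_iff_eventually_b_eq_zero]
  constructor
  · intro h
    obtain ⟨R, hR⟩ := hasComplexityLE_iff_isBigO.1 (hasComplexityLE_of_complexity_eq (t := 0) h)
    have b_tendsto_zero : Tendsto (fun n ↦ (R.b n : ℝ)) atTop (nhds 0) :=
      hR.trans_tendsto (by simpa using tendsto_inv_atTop_nhds_zero_nat (𝕜 := ℝ))
    refine ⟨R, (b_tendsto_zero.eventually_lt_const one_pos).mono fun n hn ↦ ?_⟩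
    exact Nat.lt_one_iff.1 (by exact_mod_cast hn)
  · rintro ⟨R, hR⟩
    refine le_antisymm (sInf_le ⟨0, rfl, R, 0, hR.mono fun n hn ↦ ?_⟩) bot_le
    simp [hn]

lemma isBigO_comp_add_of_isBigO_zpow {b : ℕ → ℝ} {e : ℤ}
    (hb : b =O[atTop] fun n : ℕ ↦ (n : ℝ) ^ e) (c : ℕ) :
    (fun n ↦ b (c + n)) =O[atTop] fun n : ℕ ↦ (n : ℝ) ^ e := by
  have shift_isEquivalent : (fun n : ℕ ↦ ((c + n : ℕ) : ℝ)) ~[atTop] fun n : ℕ ↦ (n : ℝ) := by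
    simp_rw [Nat.cast_add]
    exact IsEquivalent.refl.const_add_of_norm_tendsto_atTop
      (tendsto_norm_atTop_atTop.comp tendsto_natCast_atTop_atTop)
  exact (hb.comp_tendsto (tendsto_add_atTop_nat c |>.congr fun n ↦ add_comm n c)).trans
    (shift_isEquivalent.zpow e).isBigO

end Complexity

/-- A short exact sequence `0 ⟶ M ⟶ K ⟶ Ω^n(M) ⟶ 0`. In the notation of the literature, `K` is the
module `K_η` of the class `η ∈ Ext^(n+1)(M, M)` given by `Reduction.extClass`. -/
structure Reduction {A : Type u} [CommRing A] [IsLocalRing A] (M K : ModuleCat.{u} A) where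
  resolution : MinFreeRes A M
  degree : ℕ
  incl : M ⟶ K
  proj : K ⟶ resolution.syzygy degree
  zero : incl ≫ proj = 0
  shortExact : (ShortComplex.mk incl proj zero).ShortExact

namespace Reduction

open Asymptotics

variable {A : Type u} [CommRing A] [IsLocalRing A] {M K : ModuleCat.{u} A}

lemma nonempty_of_isSES (hM : complexity A M ≠ ⊤) {S : ModuleCat.{u} A} {n : ℕ}
    (hS : IsSyzygyOf A M S n) {f : M →ₗ[A] K} {g : K →ₗ[A] S} (hfg : IsSES f g) :
    Nonempty (Reduction M K) := by
  obtain ⟨R, ⟨e⟩⟩ : ∃ R : MinFreeRes A M, Nonempty (S ≃ₗ[A] R.syzygy n) := by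
    match n, hS with
    | 0, hS => exact (nonempty_minFreeRes_of_complexity_ne_top hM).elim fun R ↦ ⟨R, hS⟩
    | 1, ⟨R, hS⟩ =>
      exact ⟨R, hS.map (·.trans (.ofEq _ _ (LinearMap.exact_iff.1 R.exact_zero)))⟩
    | n + 2, ⟨R, hS⟩ =>
      exact ⟨R, hS.map (·.trans (.ofEq _ _ (LinearMap.exact_iff.1 (R.exact_succ n))))⟩
  obtain ⟨f_inj, exact_fg, g_surj⟩ := hfg
  have exact_feg : Function.Exact f (e.toLinearMap ∘ₗ g) := by
    rwa [LinearEquiv.postcomp_exact_iff_exact]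
  exact ⟨R, n, ModuleCat.ofHom f, ModuleCat.ofHom (e.toLinearMap ∘ₗ g),
    ModuleCat.hom_ext exact_feg.linearMap_comp_eq_zero,
    ModuleCat.shortComplex_shortExact _ exact_feg f_inj (e.surjective.comp g_surj)⟩

variable (ρ : Reduction M K)

/-- The class `η ∈ Ext^(n+1)(M, M)` for which `K` is the module `K_η`. -/
noncomputable def extClass : Abelian.Ext M M (ρ.degree + 1) :=
  (ρ.resolution.syzygyClass ρ.degree).comp ρ.shortExact.extClass rfl

lemma ker_precomp_extClass_le (Y : ModuleCat.{u} A) {i m : ℕ} (h : ρ.degree + 1 + i = m) :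
    LinearMap.ker (ρ.extClass.precompOfLinear A Y h) ≤
      LinearMap.range ((Abelian.Ext.mk₀ ρ.incl).precompOfLinear A Y (zero_add i)) := by
  intro x (hx : ρ.extClass.comp x h = 0)
  rw [extClass, Abelian.Ext.comp_assoc _ _ _ rfl (add_comm 1 i) (by lia)] at hx
  exact Abelian.Ext.contravariant_sequence_exact₁ ρ.shortExact Y x _
    (injective_iff_map_eq_zero _ |>.1
      (ρ.resolution.precomp_syzygyClass_injective Y i.succ_pos (by lia)) _ hx)

include ρ in
lemma eventually_subsingleton_ext {N : ModuleCat.{u} A}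
    (h : ∀ᶠ i in atTop, Subsingleton (Abelian.Ext M N i)) :
    ∀ᶠ i in atTop, Subsingleton (Abelian.Ext K N i) := by
  filter_upwards [h, (tendsto_add_atTop_nat ρ.degree).eventually h, eventually_gt_atTop 0]
    with i hM hshift hi
  rw [add_comm] at hshift
  exact subsingleton_ext_of_shortExact ρ.shortExact hM
    (ρ.resolution.subsingleton_ext_syzygy hi hshift)

lemma b_le_sum_of_extPow_eq_zero {j : ℕ} (hj : extPow ρ.extClass j = 0) (R : MinFreeRes A K)
    (i : ℕ) :
    ρ.resolution.b i ≤ ∑ l ∈ Finset.range j, R.b ((ρ.degree + 1) * l + i) := by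
  suffices (ρ.resolution.b i : ℕ∞) ≤
      ∑ l ∈ Finset.range j, (R.b ((ρ.degree + 1) * l + i) : ℕ∞) by exact_mod_cast this
  calc (ρ.resolution.b i : ℕ∞)
      = Module.length A (Abelian.Ext M (ModuleCat.of A (ResidueField A)) i) :=
        (ρ.resolution.length_ext_residueField i).symm
    _ ≤ ∑ l ∈ Finset.range j, Module.length A (LinearMap.ker
          (ρ.extClass.precompOfLinear A (ModuleCat.of A (ResidueField A)) rfl)) :=
        length_ext_le_of_extPow_eq_zero A hj _ i
    _ ≤ ∑ l ∈ Finset.range j, Module.length A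
          (Abelian.Ext K (ModuleCat.of A (ResidueField A)) ((ρ.degree + 1) * l + i)) :=
        Finset.sum_le_sum fun l _ ↦ length_le_of_le_range (ρ.ker_precomp_extClass_le _ rfl)
    _ = ∑ l ∈ Finset.range j, (R.b ((ρ.degree + 1) * l + i) : ℕ∞) :=
        Finset.sum_congr rfl fun l _ ↦ R.length_ext_residueField _

include ρ in
theorem complexity_le (h : ∀ᶠ i in atTop, Subsingleton (Abelian.Ext M M i)) :
    complexity A M ≤ complexity A K := by
  obtain ⟨j, hj⟩ := ((tendsto_id.const_mul_atTop' ρ.degree.succ_pos).eventually h).exists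
  have pow_eq_zero : extPow ρ.extClass j = 0 := hj.elim _ _
  refine le_sInf ?_
  rintro _ ⟨t, rfl, ht⟩
  obtain ⟨R, hR⟩ := hasComplexityLE_iff_isBigO.1 ht
  refine sInf_le ⟨t, rfl, hasComplexityLE_iff_isBigO.2 ⟨ρ.resolution, ?_⟩⟩
  have b_isBigO_sum : (fun i ↦ (ρ.resolution.b i : ℝ)) =O[atTop]
      fun i ↦ ∑ l ∈ Finset.range j, (R.b ((ρ.degree + 1) * l + i) : ℝ) := by
    refine .of_norm_le fun i ↦ ?_
    rw [Real.norm_of_nonneg (Nat.cast_nonneg _)]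
    exact_mod_cast ρ.b_le_sum_of_extPow_eq_zero pow_eq_zero R i
  exact b_isBigO_sum.trans (.fun_sum fun l _ ↦ isBigO_comp_add_of_isBigO_zpow hR _)

end Reduction

section ReducibleComplexity

variable {A : Type u} [CommRing A] [IsLocalRing A]

theorem complexity_lt_of_forall_extVanish {M : ModuleCat.{u} A} (hM : HasRedCxCat M) {t : ℕ}
    (ht : 0 < t)
    (h : ∀ (N : Type u) [AddCommGroup N] [Module A N] [Module.Finite A N],
      HasRedCx A N → complexity A N = t → ∀ᶠ i in atTop, extVanish A M i N) :
    complexity A M < t := by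
  induction hM with
  | of_finite_projDim M _ hpd =>
    rw [complexity_eq_zero_iff.2 hpd]
    exact_mod_cast ht
  | step M K S n hfg hKfg hpos hfin hsyz f g hses hcx hdepth hK ih =>
    obtain ⟨ρ⟩ := Reduction.nonempty_of_isSES hfin hsyz hses
    have complexity_K_lt : complexity A K < t := ih fun N _ _ _ hN hNt ↦
      (eventually_extVanish_iff K N).2
        (ρ.eventually_subsingleton_ext ((eventually_extVanish_iff M N).1 (h N hN hNt)))
    by_contra! t_le
    have complexity_M_eq : complexity A M = t := by
      obtain ⟨m, hm⟩ := ENat.ne_top_iff_exists.1 hfin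
      rw [hcx, ← hm] at complexity_K_lt
      rw [← hm] at t_le ⊢
      norm_cast at complexity_K_lt t_le ⊢
      lia
    have hM := HasRedCxCat.step M K S n hfg hKfg hpos hfin hsyz f g hses hcx hdepth hK
    have M_le_K := ρ.complexity_le ((eventually_extVanish_iff M M).1 (h M hM complexity_M_eq))
    exact (complexity_K_lt.trans_le (t_le.trans M_le_K)).false

lemma eventually_extVanish_of_hasFiniteProjDim {M : Type u} [AddCommGroup M] [Module A M]
    (h : HasFiniteProjDim A M) (N : Type u) [AddCommGroup N] [Module A N] :
    ∀ᶠ i in atTop, extVanish A M i N := by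
  obtain ⟨R, hR⟩ := hasFiniteProjDim_iff_eventually_b_eq_zero.1 h
  exact (eventually_extVanish_iff M N).2
    (hR.mono fun _ hn ↦ R.subsingleton_ext_of_b_eq_zero hn _)

end ReducibleComplexity

end ComplexityTest

theorem complexity_lt_of_extVanish_against_rc_general
    (A : Type u) [CommRing A] [IsLocalRing A] (M : Type u) [AddCommGroup M] [Module A M]
    (hM : HasRedCx A M) :
    (∀ t : ℕ, 0 < t →
      (∀ (N : Type u) [AddCommGroup N] [Module A N] [Module.Finite A N],
        HasRedCx A N → complexity A N = t →
          ∀ᶠ i in Filter.atTop, extVanish A M i N) →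
      complexity A M < (t : ℕ∞)) ∧
    (HasFiniteProjDim A M ↔
      ∀ (N : Type u) [AddCommGroup N] [Module A N] [Module.Finite A N],
        HasRedCx A N → complexity A N = 1 →
          ∀ᶠ i in Filter.atTop, extVanish A M i N) := by
  refine ⟨fun t ht h ↦ complexity_lt_of_forall_extVanish hM ht h,
    fun h N _ _ _ _ _ ↦ eventually_extVanish_of_hasFiniteProjDim h N, fun h ↦ ?_⟩
  have complexity_lt_one : complexity A M < (1 : ℕ) :=
    complexity_lt_of_forall_extVanish hM one_pos fun N _ _ _ hN hcx ↦ h N hN (by simpa using hcx)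
  exact complexity_eq_zero_iff.1 (Order.lt_one_iff.1 (by simpa using complexity_lt_one))

/-- **Theorem 3.2 / Corollary 3.3 for reducible complexity**: let `M` be a module of
reducible complexity over the local ring `A` and `t` a (positive) natural number. If
`Ext^i_A(M,N) = 0` for `i ≫ 0` for every module `N` of reducible complexity with
`cx N = t`, then `cx M < t`. In particular, `M` has finite projective dimension if and
only if `Ext^i_A(M,N) = 0` for `i ≫ 0` for every `N` of reducible complexity with
`cx N = 1`. -/
theorem complexity_lt_of_extVanish_against_rc
    (A : Type u) [CommRing A] [IsLocalRing A] [IsNoetherianRing A]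
    (M : Type u) [AddCommGroup M] [Module A M] [Module.Finite A M]
    (hM : HasRedCx A M) :
    (∀ t : ℕ, 0 < t →
      (∀ (N : Type u) [AddCommGroup N] [Module A N] [Module.Finite A N],
        HasRedCx A N → complexity A N = t →
          ∀ᶠ i in Filter.atTop, extVanish A M i N) →
      complexity A M < (t : ℕ∞)) ∧
    (HasFiniteProjDim A M ↔
      ∀ (N : Type u) [AddCommGroup N] [Module A N] [Module.Finite A N],
        HasRedCx A N → complexity A N = 1 →
          ∀ᶠ i in Filter.atTop, extVanish A M i N) :=
  complexity_lt_of_extVanish_against_rc_general A M hM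
end

section
/- Let (A, 𝔪, k) be a Gorenstein commutative Noetherian local ring, let M be a finitely generated A-module having reducible complexity, and let N be any finitely generated A-module. If Ext^i_A(N,M) = 0 for all i ≫ 0, then Ext^i_A(M,N) = 0 for all i ≫ 0. In particular, symmetry in the vanishing of cohomology holds for modules having reducible complexity. -/
open CategoryTheory Opposite Filter IsLocalRing

universe u

open ComplexityTest

/-!
Along the reductions `0 → M → K → Ωⁿ M → 0`, down to a module of finite projective dimension, one
sees that a module `M` of reducible complexity has a constant `c` such that `Ext^i(M, Y)` vanishes
for all `i > s` as soon as it vanishes for `c` consecutive degrees after `s`.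

Let `d` be the injective dimension of `A`, put `X = Ω^d M`, and replace `N` by a high syzygy, so
that `Ext^i(X, A) = 0` and `Ext^i(N, X) = 0` for all `i > 0`. Then `Hom(-, X)` is exact along the
free resolution of `N`, and the modules `Hom(Ω^j N, X)` have no higher `Ext` into `A`. For `F`
finite free, the trace pairing identifies `Hom(X, F)` with the dual of `Hom(F, X)`; dualizing
therefore shows that every map `X → Ω²N` lifts to the free cover of `Ω²N`, i.e.
`Ext^1(X, Ω³N) = 0`. Shifting along further syzygies yields arbitrarily long runs of vanishing of
`Ext^i(M, Ω^n N)`, hence vanishing for all `i > d`, and this descends from `Ω^n N` to `N`.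
-/

namespace ComplexityTest

section Abelian

universe w v u'

variable {C : Type u'} [Category.{v} C] [Abelian C] [HasExt.{w} C]
  {S : ShortComplex C} {X Y : C} {n : ℕ}

theorem subsingleton_ext_of_iso_left (e : X ≅ Y) (Z : C) :
    Subsingleton (Abelian.Ext X Z n) ↔ Subsingleton (Abelian.Ext Y Z n) :=
  (((Abelian.extFunctor n).mapIso e.symm.op).app Z).addCommGroupIsoToAddEquiv.toEquiv
    |>.subsingleton_congr

theorem subsingleton_ext_of_iso_right (Z : C) (e : X ≅ Y) :
    Subsingleton (Abelian.Ext Z X n) ↔ Subsingleton (Abelian.Ext Z Y n) :=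
  ((Abelian.extFunctorObj Z n).mapIso e).addCommGroupIsoToAddEquiv.toEquiv.subsingleton_congr

theorem contravariant_subsingleton_ext₁ (hS : S.ShortExact)
    (h₂ : Subsingleton (Abelian.Ext S.X₂ Y n)) (h₃ : Subsingleton (Abelian.Ext S.X₃ Y (n + 1))) :
    Subsingleton (Abelian.Ext S.X₁ Y n) := by
  refine subsingleton_of_forall_eq 0 fun e ↦ ?_
  obtain ⟨e₂, rfl⟩ :=
    Abelian.Ext.contravariant_sequence_exact₁ hS _ e (add_comm 1 n) (Subsingleton.elim _ _)
  rw [Subsingleton.elim e₂ 0, Abelian.Ext.comp_zero]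

theorem contravariant_subsingleton_ext₂ (hS : S.ShortExact)
    (h₁ : Subsingleton (Abelian.Ext S.X₁ Y n)) (h₃ : Subsingleton (Abelian.Ext S.X₃ Y n)) :
    Subsingleton (Abelian.Ext S.X₂ Y n) := by
  refine subsingleton_of_forall_eq 0 fun e ↦ ?_
  obtain ⟨e₃, rfl⟩ :=
    Abelian.Ext.contravariant_sequence_exact₂ hS _ e (Subsingleton.elim _ _)
  rw [Subsingleton.elim e₃ 0, Abelian.Ext.comp_zero]

theorem contravariant_subsingleton_ext₃ (hS : S.ShortExact)
    (h₁ : Subsingleton (Abelian.Ext S.X₁ Y n)) (h₂ : Subsingleton (Abelian.Ext S.X₂ Y (n + 1))) :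
    Subsingleton (Abelian.Ext S.X₃ Y (n + 1)) := by
  refine subsingleton_of_forall_eq 0 fun e ↦ ?_
  obtain ⟨e₁, rfl⟩ :=
    Abelian.Ext.contravariant_sequence_exact₃ hS _ e (Subsingleton.elim _ _) (add_comm 1 n)
  rw [Subsingleton.elim e₁ 0, Abelian.Ext.comp_zero]

theorem covariant_subsingleton_ext₁ (hS : S.ShortExact)
    (h₃ : Subsingleton (Abelian.Ext X S.X₃ n)) (h₂ : Subsingleton (Abelian.Ext X S.X₂ (n + 1))) :
    Subsingleton (Abelian.Ext X S.X₁ (n + 1)) := by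
  refine subsingleton_of_forall_eq 0 fun e ↦ ?_
  obtain ⟨e₃, rfl⟩ :=
    Abelian.Ext.covariant_sequence_exact₁ _ hS e (Subsingleton.elim _ _) rfl
  rw [Subsingleton.elim e₃ 0, Abelian.Ext.zero_comp]

theorem covariant_subsingleton_ext₃ (hS : S.ShortExact)
    (h₂ : Subsingleton (Abelian.Ext X S.X₂ n)) (h₁ : Subsingleton (Abelian.Ext X S.X₁ (n + 1))) :
    Subsingleton (Abelian.Ext X S.X₃ n) := by
  refine subsingleton_of_forall_eq 0 fun e ↦ ?_
  obtain ⟨e₂, rfl⟩ :=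
    Abelian.Ext.covariant_sequence_exact₃ _ hS e rfl (Subsingleton.elim _ _)
  rw [Subsingleton.elim e₂ 0, Abelian.Ext.zero_comp]

theorem subsingleton_ext_X₁_iff_X₃ (hS : S.ShortExact) (_ : Projective S.X₂) (Y : C) (n : ℕ) :
    Subsingleton (Abelian.Ext S.X₁ Y (n + 1)) ↔ Subsingleton (Abelian.Ext S.X₃ Y (n + 2)) :=
  ⟨fun h ↦ contravariant_subsingleton_ext₃ hS h (Abelian.Ext.subsingleton_of_projective _ _ _),
    contravariant_subsingleton_ext₁ hS (Abelian.Ext.subsingleton_of_projective _ _ _)⟩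

theorem exists_f_comp_eq_of_subsingleton_ext_one (hS : S.ShortExact)
    (h₃ : Subsingleton (Abelian.Ext S.X₃ Y 1)) (φ : S.X₁ ⟶ Y) : ∃ ψ : S.X₂ ⟶ Y, S.f ≫ ψ = φ := by
  obtain ⟨e, he⟩ := Abelian.Ext.contravariant_sequence_exact₁ hS _ (Abelian.Ext.mk₀ φ)
    (add_zero 1) (Subsingleton.elim _ _)
  obtain ⟨ψ, rfl⟩ := (Abelian.Ext.mk₀_bijective _ _).2 e
  rw [Abelian.Ext.mk₀_comp_mk₀] at he
  exact ⟨ψ, (Abelian.Ext.mk₀_bijective _ _).1 he⟩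

theorem subsingleton_ext_one_of_forall_exists_comp_g_eq (hS : S.ShortExact)
    (h₂ : Subsingleton (Abelian.Ext X S.X₂ 1)) (h : ∀ φ : X ⟶ S.X₃, ∃ ψ, ψ ≫ S.g = φ) :
    Subsingleton (Abelian.Ext X S.X₁ 1) := by
  refine subsingleton_of_forall_eq 0 fun e ↦ ?_
  obtain ⟨e₃, rfl⟩ :=
    Abelian.Ext.covariant_sequence_exact₁ _ hS e (Subsingleton.elim _ _) (zero_add 1)
  obtain ⟨φ, rfl⟩ := (Abelian.Ext.mk₀_bijective _ _).2 e₃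
  obtain ⟨ψ, rfl⟩ := h φ
  rw [← Abelian.Ext.mk₀_comp_mk₀, Abelian.Ext.comp_assoc_of_second_deg_zero,
    hS.comp_extClass, Abelian.Ext.comp_zero]

end Abelian

section Modules

variable {A : Type u} [CommRing A]

theorem subsingleton_ext_of_subsingleton (X Y : ModuleCat.{u} A) [Subsingleton X] (n : ℕ) :
    Subsingleton (Abelian.Ext X Y n) :=
  have := (ModuleCat.isZero_of_subsingleton X).hasProjectiveDimensionLT_zero
  HasProjectiveDimensionLT.subsingleton X 0 n (Nat.zero_le n) Y

theorem subsingleton_ext_pi_left {ι : Type} [Finite ι] (X : Type u) [AddCommGroup X] [Module A X]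
    (Y : ModuleCat.{u} A) {n : ℕ} (h : Subsingleton (Abelian.Ext (ModuleCat.of A X) Y n)) :
    Subsingleton (Abelian.Ext (ModuleCat.of A (ι → X)) Y n) := by
  have := Fintype.ofFinite ι
  rw [← subsingleton_ext_of_iso_left (ModuleCat.biproductIsoPi fun _ : ι ↦ ModuleCat.of A X)]
  exact (Abelian.Ext.biproductAddEquiv (Limits.biproduct.isBilimit _) Y n).toEquiv.subsingleton

theorem subsingleton_ext_pi_right {ι : Type} [Finite ι] (X : ModuleCat.{u} A) (Y : Type u)
    [AddCommGroup Y] [Module A Y] {n : ℕ}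
    (h : Subsingleton (Abelian.Ext X (ModuleCat.of A Y) n)) :
    Subsingleton (Abelian.Ext X (ModuleCat.of A (ι → Y)) n) := by
  have := Fintype.ofFinite ι
  rw [← subsingleton_ext_of_iso_right _
    (ModuleCat.biproductIsoPi fun _ : ι ↦ ModuleCat.of A Y)]
  exact (Abelian.Ext.addEquivBiproduct X (Limits.biproduct.isBilimit _) n).toEquiv.subsingleton

variable {X₁ X₂ X₃ : Type u} [AddCommGroup X₁] [Module A X₁] [AddCommGroup X₂] [Module A X₂]
  [AddCommGroup X₃] [Module A X₃] {f : X₁ →ₗ[A] X₂} {g : X₂ →ₗ[A] X₃}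

theorem IsSES.shortExact (h : IsSES f g) :
    (ShortComplex.moduleCatMk f g h.2.1.linearMap_comp_eq_zero).ShortExact :=
  ModuleCat.shortComplex_shortExact _ h.2.1 h.1 h.2.2

theorem IsSES.lcomp_surjective (h : IsSES f g) {Y : Type u} [AddCommGroup Y] [Module A Y]
    (hY : Subsingleton (Abelian.Ext (ModuleCat.of A X₃) (ModuleCat.of A Y) 1)) :
    Function.Surjective (f.lcomp A Y) := fun φ ↦
  have ⟨ψ, hψ⟩ := exists_f_comp_eq_of_subsingleton_ext_one h.shortExact hY (ModuleCat.ofHom φ)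
  ⟨ψ.hom, congrArg ModuleCat.Hom.hom hψ⟩

theorem IsSES.lcomp (h : IsSES f g) {Y : Type u} [AddCommGroup Y] [Module A Y]
    (hY : Subsingleton (Abelian.Ext (ModuleCat.of A X₃) (ModuleCat.of A Y) 1)) :
    IsSES (g.lcomp A Y) (f.lcomp A Y) :=
  ⟨LinearMap.lcomp_injective_of_surjective g h.2.2,
    LinearMap.exact_lcomp_of_exact_of_surjective Y h.2.1 h.2.2, h.lcomp_surjective hY⟩

theorem isSES_subtype_ker (hg : Function.Surjective g) : IsSES (LinearMap.ker g).subtype g :=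
  ⟨Submodule.subtype_injective _, LinearMap.exact_subtype_ker_map g, hg⟩

theorem IsSES.subsingleton_ext_iff_of_projective [Module.Projective A X₂] (h : IsSES f g)
    (Y : ModuleCat.{u} A) (n : ℕ) : Subsingleton (Abelian.Ext (ModuleCat.of A X₁) Y (n + 1)) ↔
      Subsingleton (Abelian.Ext (ModuleCat.of A X₃) Y (n + 2)) :=
  subsingleton_ext_X₁_iff_X₃ h.shortExact ((IsProjective.iff_projective X₂).1 ‹_›) Y n

theorem codRestrict_ker_surjective_of_exact (h : Function.Exact f g) :
    Function.Surjective (f.codRestrict (LinearMap.ker g) h.apply_apply_eq_zero) := fun y ↦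
  have ⟨x, hx⟩ := (h y).1 y.2
  ⟨x, Subtype.ext hx⟩

theorem subsingleton_ext_ker_iff_of_exact [Module.Projective A X₁] (h : Function.Exact f g)
    (Y : ModuleCat.{u} A) (n : ℕ) :
    Subsingleton (Abelian.Ext (ModuleCat.of A (LinearMap.ker f)) Y (n + 1)) ↔
      Subsingleton (Abelian.Ext (ModuleCat.of A (LinearMap.ker g)) Y (n + 2)) := by
  have h_ses := isSES_subtype_ker (codRestrict_ker_surjective_of_exact h)
  rw [LinearMap.ker_codRestrict (LinearMap.ker g) f h.apply_apply_eq_zero] at h_ses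
  exact h_ses.subsingleton_ext_iff_of_projective Y n

theorem subsingleton_obj_ext_iff (X Y : ModuleCat.{u} A) (n : ℕ) :
    Subsingleton (((_root_.Ext A (ModuleCat.{u} A) (n + 1)).obj (op X)).obj Y) ↔
      Subsingleton (Abelian.Ext X Y (n + 1)) := by
  let P := projectiveResolution X
  calc
    _ ↔ ∀ f : P.complex.X (n + 1) ⟶ Y, P.complex.d (n + 2) (n + 1) ≫ f = 0 →
          ∃ g : P.complex.X n ⟶ Y, P.complex.d (n + 1) n ≫ g = f := by
      rw [← ModuleCat.isZero_iff_subsingleton, (P.isoExt (R := A) (n + 1) Y).isZero_iff,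
        ← HomologicalComplex.exactAt_iff_isZero_homology,
        HomologicalComplex.exactAt_iff' _ n (n + 1) (n + 2) (by simp) (by simp),
        ShortComplex.moduleCat_exact_iff]
      rfl
    _ ↔ Subsingleton (Abelian.Ext X Y (n + 1)) := by
      refine ⟨fun h ↦ subsingleton_of_forall_eq 0 fun e ↦ ?_, fun h f hf ↦ ?_⟩
      · obtain ⟨f, hf, rfl⟩ := P.extMk_surjective e (n + 2) rfl
        exact (P.extMk_eq_zero_iff f (n + 2) rfl hf n rfl).2 (h f hf)
      · exact (P.extMk_eq_zero_iff f (n + 2) rfl hf n rfl).1 (Subsingleton.elim _ _)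

theorem extVanish_iff_subsingleton_ext {M N : Type u} [AddCommGroup M] [Module A M]
    [AddCommGroup N] [Module A N] {i : ℕ} (hi : i ≠ 0) : extVanish A M i N ↔
      Subsingleton (Abelian.Ext (ModuleCat.of A M) (ModuleCat.of A N) i) := by
  obtain ⟨n, rfl⟩ := Nat.exists_eq_succ_of_ne_zero hi
  exact subsingleton_obj_ext_iff _ _ n

end Modules

section InjectiveDimension

variable {A : Type u} [CommRing A]

theorem injective_of_subsingleton_ext_one_quotient (Y : ModuleCat.{u} A)
    (h : ∀ I : Ideal A, Subsingleton (Abelian.Ext (ModuleCat.of A (A ⧸ I)) Y 1)) :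
    Injective Y := by
  rw [← Module.injective_iff_injective_object, ← Module.Baer.iff_injective,
    Module.Baer.iff_surjective]
  intro I
  have hI : IsSES I.subtype I.mkQ :=
    ⟨I.subtype_injective, LinearMap.exact_subtype_mkQ I, I.mkQ_surjective⟩
  exact hI.lcomp_surjective (h I)

theorem hasInjectiveDimensionLE_of_subsingleton_ext_quotient {n : ℕ} (Y : ModuleCat.{u} A)
    (h : ∀ I : Ideal A, Subsingleton (Abelian.Ext (ModuleCat.of A (A ⧸ I)) Y (n + 1))) :
    HasInjectiveDimensionLE Y n := by
  induction n generalizing Y with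
  | zero =>
    have := injective_of_subsingleton_ext_one_quotient Y h
    infer_instance
  | succ n ih =>
    obtain ⟨P⟩ := EnoughInjectives.presentation Y
    have hS : (ShortComplex.mk P.f _ (Limits.cokernel.condition P.f)).ShortExact :=
      { exact := ShortComplex.exact_cokernel P.f }
    refine (hS.hasInjectiveDimensionLT_X₃_iff _ P.injective).1 (ih _ fun I ↦ ?_)
    exact covariant_subsingleton_ext₃ hS (Abelian.Ext.subsingleton_of_injective _ _ _) (h I)

variable [IsNoetherianRing A]

open Pointwise in
theorem subsingleton_ext_of_quotSMulTop (Q Y : ModuleCat.{u} A) [Module.Finite A Q]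
    [Module.Finite A Y] {x : A} (hx : x ∈ (⊥ : Ideal A).jacobson) (hreg : IsSMulRegular Q x) {i : ℕ}
    (h : Subsingleton (Abelian.Ext (ModuleCat.of A (QuotSMulTop x Q)) Y (i + 1))) :
    Subsingleton (Abelian.Ext Q Y i) := by
  by_contra! hnontrivial
  have hx' : x ∈ (Module.annihilator A (Abelian.Ext Q Y i)).jacobson :=
    Ideal.jacobson_mono bot_le hx
  suffices h_top : x • (⊤ : Submodule A (Abelian.Ext Q Y i)) = ⊤ from
    Submodule.top_ne_pointwise_smul_of_mem_jacobson_annihilator hx' h_top.symm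
  refine eq_top_iff.2 fun e _ ↦ ?_
  obtain ⟨e' : Abelian.Ext Q Y i, rfl⟩ := Abelian.Ext.contravariant_sequence_exact₁
    hreg.smulShortComplex_shortExact _ e (add_comm 1 i) (h.elim _ _)
  have h_smul : x • e' = (Abelian.Ext.mk₀ (x • 𝟙 Q : Q ⟶ Q)).comp e' (zero_add i) := by
    rw [Abelian.Ext.mk₀_smul, Abelian.Ext.smul_comp, Abelian.Ext.mk₀_id_comp]
  have h_mem := Submodule.smul_mem_pointwise_smul e' x (⊤ : Submodule A _) trivial
  rwa [h_smul] at h_mem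

theorem subsingleton_ext_of_forall_prime_quotient (I : Ideal A) (Y : ModuleCat.{u} A) {i : ℕ}
    (h : ∀ p : Ideal A, p.IsPrime → I ≤ p →
      Subsingleton (Abelian.Ext (ModuleCat.of A (A ⧸ p)) Y i))
    (Q : Type u) [AddCommGroup Q] [Module A Q] [hQ : Module.Finite A Q]
    (hI : I ≤ Module.annihilator A Q) : Subsingleton (Abelian.Ext (ModuleCat.of A Q) Y i) := by
  induction hQ using IsNoetherianRing.induction_on_isQuotientEquivQuotientPrime A with
  | subsingleton Q => exact subsingleton_ext_of_subsingleton _ _ _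
  | quotient Q p e =>
    rw [subsingleton_ext_of_iso_left e.toModuleIso]
    rw [e.annihilator_eq, Ideal.annihilator_quotient] at hI
    exact h p.1 p.2 hI
  | exact Q₁ Q₂ Q₃ f g hf hg hfg h₁ h₃ =>
    exact contravariant_subsingleton_ext₂ (IsSES.shortExact ⟨hf, hfg, hg⟩)
      (h₁ (hI.trans (f.annihilator_le_of_injective hf)))
      (h₃ (hI.trans (g.annihilator_le_of_surjective hg)))

theorem subsingleton_ext_prime_quotient [IsLocalRing A] (Y : ModuleCat.{u} A)
    [Module.Finite A Y] {n : ℕ}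
    (h : ∀ i > n, Subsingleton (Abelian.Ext (ModuleCat.of A (ResidueField A)) Y i))
    (p : Ideal A) (hp : p.IsPrime) {i : ℕ} (hi : i > n) :
    Subsingleton (Abelian.Ext (ModuleCat.of A (A ⧸ p)) Y i) := by
  induction p using WellFoundedGT.induction generalizing i with
  | ind p ih =>
    obtain rfl | hlt := (le_maximalIdeal hp.ne_top).eq_or_lt
    · exact h i hi
    obtain ⟨x, hxm, hxp⟩ := SetLike.exists_of_lt hlt
    have hreg : IsSMulRegular (A ⧸ p) x :=
      (isSMulRegular_algebraMap_iff (A ⧸ p)).1 <|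
        .of_ne_zero fun hx ↦ hxp (Ideal.Quotient.eq_zero_iff_mem.1 hx)
    refine subsingleton_ext_of_quotSMulTop _ _ (maximalIdeal_le_jacobson _ hxm) hreg ?_
    have hann : p ⊔ Ideal.span {x} ≤ Module.annihilator A (QuotSMulTop x (A ⧸ p)) := by
      refine sup_le ?_ ((Ideal.span_singleton_le_iff_mem _).2 (QuotSMulTop.mem_annihilator _ x))
      exact p.annihilator_quotient.ge.trans
        (LinearMap.annihilator_le_of_surjective _ (Submodule.mkQ_surjective _))
    refine subsingleton_ext_of_forall_prime_quotient _ Y (fun q hqp hq ↦ ?_) _ hann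
    have hpq : p < q := lt_of_le_of_ne (le_sup_left.trans hq) fun hpq ↦
      hxp (hpq ▸ hq (Ideal.mem_sup_right (Ideal.mem_span_singleton_self x)))
    exact ih q hpq hqp (by omega)

theorem hasInjectiveDimensionLE_of_subsingleton_ext_residueField [IsLocalRing A]
    (Y : ModuleCat.{u} A) [Module.Finite A Y] {n : ℕ}
    (h : ∀ i > n, Subsingleton (Abelian.Ext (ModuleCat.of A (ResidueField A)) Y i)) :
    HasInjectiveDimensionLE Y n :=
  hasInjectiveDimensionLE_of_subsingleton_ext_quotient Y fun _ ↦
    subsingleton_ext_of_forall_prime_quotient ⊥ Y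
      (fun p hp _ ↦ subsingleton_ext_prime_quotient Y h p hp n.lt_succ_self) _ bot_le

theorem IsGorenstein.exists_hasInjectiveDimensionLE [IsLocalRing A] (hA : IsGorenstein A) :
    ∃ d, HasInjectiveDimensionLE (ModuleCat.of A A) d := by
  obtain ⟨d, hd⟩ := hA
  exact ⟨d, hasInjectiveDimensionLE_of_subsingleton_ext_residueField _ fun i hi ↦
    (extVanish_iff_subsingleton_ext hi.ne_bot).1 (hd i hi)⟩

end InjectiveDimension

section BoundedExtGaps

variable {A : Type u} [CommRing A]

/-- `M` has bounded `Ext`-gaps if, for some `c`, whenever `Ext^i(M, Y)` vanishes for `c` consecutive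
values of `i`, it vanishes for all larger `i`; here `Y` runs over the finitely generated modules.
This is the form in which reducible complexity enters the symmetry theorem. -/
def HasBoundedExtGaps (M : ModuleCat.{u} A) : Prop :=
  ∃ c, ∀ (Y : ModuleCat.{u} A) [Module.Finite A Y] (s : ℕ),
    (∀ i ∈ Set.Ioc s (s + c), Subsingleton (Abelian.Ext M Y i)) →
      ∀ i > s, Subsingleton (Abelian.Ext M Y i)

theorem HasBoundedExtGaps.of_hasProjectiveDimensionLT (M : ModuleCat.{u} A) (t : ℕ)
    [HasProjectiveDimensionLT M t] : HasBoundedExtGaps M := by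
  refine ⟨t, fun Y _ s hs i hi ↦ ?_⟩
  obtain hit | hit := le_total i (s + t)
  · exact hs i ⟨hi, hit⟩
  · exact HasProjectiveDimensionLT.subsingleton M t i (by omega) Y

section MinimalResolutions

variable [IsLocalRing A] {M S : Type u} [AddCommGroup M] [Module A M] [AddCommGroup S] [Module A S]

theorem MinFreeRes.subsingleton_ext_ker_d_iff (R : MinFreeRes A M) (Y : ModuleCat.{u} A) (n i : ℕ) :
    Subsingleton (Abelian.Ext (ModuleCat.of A (LinearMap.ker (R.d n))) Y (i + 1)) ↔
      Subsingleton (Abelian.Ext (ModuleCat.of A M) Y (i + 1 + (n + 2))) := by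
  induction n generalizing i with
  | zero =>
    rw [subsingleton_ext_ker_iff_of_exact R.exact_zero,
      (isSES_subtype_ker R.aug_surjective).subsingleton_ext_iff_of_projective]
  | succ n ih =>
    rw [subsingleton_ext_ker_iff_of_exact (R.exact_succ n), ih (i + 1)]
    congr! 2
    omega

theorem IsSyzygyOf.subsingleton_ext_iff {n : ℕ} (h : IsSyzygyOf A M S n) (Y : ModuleCat.{u} A)
    (i : ℕ) :
    Subsingleton (Abelian.Ext (ModuleCat.of A S) Y (i + 1)) ↔
      Subsingleton (Abelian.Ext (ModuleCat.of A M) Y (i + 1 + n)) := by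
  match n, h with
  | 0, ⟨e⟩ => exact subsingleton_ext_of_iso_left e.toModuleIso Y
  | 1, ⟨R, ⟨e⟩⟩ =>
    rw [subsingleton_ext_of_iso_left e.toModuleIso,
      (isSES_subtype_ker R.aug_surjective).subsingleton_ext_iff_of_projective]
  | n + 2, ⟨R, ⟨e⟩⟩ =>
    rw [subsingleton_ext_of_iso_left e.toModuleIso, R.subsingleton_ext_ker_d_iff]

theorem HasFiniteProjDim.exists_hasProjectiveDimensionLT (h : HasFiniteProjDim A M) :
    ∃ t, HasProjectiveDimensionLT (ModuleCat.of A M) t := by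
  obtain ⟨t, R, hR⟩ := h
  refine ⟨t + 3, (hasProjectiveDimensionLT_iff _ _).2 fun i hi Y e ↦ ?_⟩
  have hb : IsEmpty (Fin (R.b (t + 1))) := by
    rw [hR _ t.lt_succ_self]
    infer_instance
  have h_ker := subsingleton_ext_of_subsingleton (ModuleCat.of A (LinearMap.ker (R.d t))) Y
    (i - (t + 3) + 1)
  rw [R.subsingleton_ext_ker_d_iff, show i - (t + 3) + 1 + (t + 2) = i by omega] at h_ker
  exact Subsingleton.elim e 0

end MinimalResolutions

variable [IsLocalRing A] {M K S : ModuleCat.{u} A}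

theorem HasBoundedExtGaps.of_isSES_of_isSyzygyOf (hK : HasBoundedExtGaps K) {f : M →ₗ[A] K}
    {g : K →ₗ[A] S} (h : IsSES f g) {n : ℕ} (hS : IsSyzygyOf A M S n) : HasBoundedExtGaps M := by
  obtain ⟨c, hc⟩ := hK
  refine ⟨c + n + 1, fun Y _ s hs ↦ ?_⟩
  have hKY : ∀ i > s, Subsingleton (Abelian.Ext K Y i) := by
    refine hc Y s fun i ⟨hsi, hic⟩ ↦ ?_
    obtain ⟨j, rfl⟩ := Nat.exists_eq_succ_of_ne_zero hsi.ne_bot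
    exact contravariant_subsingleton_ext₂ h.shortExact (hs _ ⟨hsi, by omega⟩)
      ((hS.subsingleton_ext_iff Y j).2 (hs _ ⟨by omega, by omega⟩))
  intro i hi
  induction i using Nat.strong_induction_on with
  | _ i ih =>
    obtain hic | hci := le_or_gt i (s + (c + n + 1))
    · exact hs i ⟨hi, hic⟩
    obtain ⟨j, rfl⟩ : ∃ j, i = j + 1 + n := ⟨i - n - 1, by omega⟩
    refine (hS.subsingleton_ext_iff Y j).1 ?_
    exact contravariant_subsingleton_ext₃ h.shortExact (ih j (by omega) (by omega))
      (hKY (j + 1) (by omega))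

theorem HasFreeRedCxCat.hasBoundedExtGaps (hM : HasFreeRedCxCat M) :
    HasBoundedExtGaps M := by
  induction hM with
  | of_finite_projDim M _ h =>
    obtain ⟨t, _⟩ := h.exists_hasProjectiveDimensionLT
    exact .of_hasProjectiveDimensionLT M t
  | step M K S n _ _ _ _ hsyz f g hses _ _ ih => exact ih.of_isSES_of_isSyzygyOf hses hsyz

theorem HasRedCxCat.hasFreeRedCxCat (hM : HasRedCxCat M) :
    HasFreeRedCxCat M := by
  induction hM with
  | of_finite_projDim M hfg h => exact .of_finite_projDim M hfg h
  | step M K S n hfg hKfg hpos hfin hsyz f g hses hcx _ _ ih =>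
    exact .step M K S n hfg hKfg hpos hfin hsyz f g hses hcx ih

end BoundedExtGaps

section TracePairing

variable {A : Type u} [CommRing A] (X F : Type u) [AddCommGroup X] [Module A X] [AddCommGroup F]
  [Module A F]

/-- The pairing `(ψ, h) ↦ tr (ψ ∘ h)` between `Hom(X, F)` and `Hom(F, X)`; for `F` finite free it
identifies `Hom(X, F)` with the dual of `Hom(F, X)`. -/
noncomputable def tracePairing : (X →ₗ[A] F) →ₗ[A] (F →ₗ[A] X) →ₗ[A] A :=
  (LinearMap.llcomp A F X F).compr₂ (LinearMap.trace A F)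

variable {X F}

theorem tracePairing_apply (ψ : X →ₗ[A] F) (h : F →ₗ[A] X) :
    tracePairing X F ψ h = LinearMap.trace A F (ψ ∘ₗ h) := rfl

theorem sum_coord_smulRight {ι : Type*} [Fintype ι] (b : Module.Basis ι A F) (h : F →ₗ[A] X) :
    ∑ i, (b.coord i).smulRight (h (b i)) = h := by
  ext x
  conv_rhs => rw [← b.sum_repr x, map_sum]
  simp only [LinearMap.sum_apply, LinearMap.smulRight_apply, Module.Basis.coord_apply, map_smul]

variable [Module.Free A F] [Module.Finite A F]

theorem tracePairing_smulRight (ψ : X →ₗ[A] F) (f : F →ₗ[A] A) (x : X) :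
    tracePairing X F ψ (f.smulRight x) = f (ψ x) := by
  have h_comp : ψ ∘ₗ f.smulRight x = f.smulRight (ψ x) :=
    LinearMap.ext fun y ↦ map_smul ψ (f y) x
  rw [tracePairing_apply, h_comp, LinearMap.trace_smulRight]

theorem tracePairing_injective : Function.Injective (tracePairing (A := A) X F) := by
  intro ψ χ h
  ext x
  refine (Module.Free.chooseBasis A F).ext_elem fun i ↦ ?_
  simpa only [tracePairing_smulRight, Module.Basis.coord_apply] using
    LinearMap.congr_fun h (((Module.Free.chooseBasis A F).coord i).smulRight x)

theorem tracePairing_surjective : Function.Surjective (tracePairing (A := A) X F) := by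
  intro Φ
  let b := Module.Free.chooseBasis A F
  let ψ : X →ₗ[A] F := ∑ i, (Φ ∘ₗ LinearMap.smulRightₗ (b.coord i)).smulRight (b i)
  have hψ (i) (x : X) : b.coord i (ψ x) = Φ ((b.coord i).smulRight x) := by
    classical
    simp [ψ, Finsupp.single_apply]
  refine ⟨ψ, LinearMap.ext fun h ↦ ?_⟩
  rw [← sum_coord_smulRight b h, map_sum (tracePairing X F ψ), map_sum Φ]
  exact Finset.sum_congr rfl fun i _ ↦ by rw [tracePairing_smulRight, hψ]

theorem tracePairing_comp {G : Type u} [AddCommGroup G] [Module A G] [Module.Free A G]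
    [Module.Finite A G] (d : G →ₗ[A] F) (χ : X →ₗ[A] G) (h : F →ₗ[A] X) :
    tracePairing X F (d ∘ₗ χ) h = tracePairing X G χ (h ∘ₗ d) := by
  rw [tracePairing_apply, tracePairing_apply, LinearMap.comp_assoc, LinearMap.trace_comp_comm',
    LinearMap.comp_assoc]

end TracePairing

section Syzygies

variable {A : Type u} [CommRing A]

/-- The rank of a chosen finite free module mapping onto `X`. -/
noncomputable def coverRank (X : FGModuleCat.{u} A) : ℕ :=
  (Module.Finite.exists_fin' A X).choose

/-- A chosen surjection from a finite free module onto `X`. -/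
noncomputable def cover (X : FGModuleCat.{u} A) : (Fin (coverRank X) → A) →ₗ[A] X :=
  (Module.Finite.exists_fin' A X).choose_spec.choose

theorem cover_surjective (X : FGModuleCat.{u} A) : Function.Surjective (cover X) :=
  (Module.Finite.exists_fin' A X).choose_spec.choose_spec

variable [IsNoetherianRing A]

/-- The first syzygy of `X` with respect to `cover X`. The cover is not required to be minimal, so
this is defined up to a free summand only. -/
noncomputable def syzygy (X : FGModuleCat.{u} A) : FGModuleCat.{u} A :=
  FGModuleCat.of A (LinearMap.ker (cover X))

/-- The inclusion of the syzygy of `X` into the free module covering `X`. -/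
noncomputable def syzygyInclusion (X : FGModuleCat.{u} A) :
    syzygy X →ₗ[A] (Fin (coverRank X) → A) :=
  (LinearMap.ker (cover X)).subtype

theorem isSES_syzygy (X : FGModuleCat.{u} A) : IsSES (syzygyInclusion X) (cover X) :=
  isSES_subtype_ker (cover_surjective X)

theorem subsingleton_ext_syzygy_iterate_left_iff (X : FGModuleCat.{u} A) (Y : ModuleCat.{u} A)
    (n i : ℕ) : Subsingleton (Abelian.Ext (syzygy^[n] X).obj Y (i + 1)) ↔
      Subsingleton (Abelian.Ext X.obj Y (i + 1 + n)) := by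
  induction n generalizing X with
  | zero => rfl
  | succ n ih =>
    rw [Function.iterate_succ_apply, ih, add_right_comm]
    refine ((isSES_syzygy X).subsingleton_ext_iff_of_projective Y (i + n)).trans ?_
    congr! 2
    omega

theorem subsingleton_ext_syzygy_right {X : ModuleCat.{u} A} {Y : FGModuleCat.{u} A} {i : ℕ}
    (hA : Subsingleton (Abelian.Ext X (ModuleCat.of A A) (i + 1)))
    (hY : Subsingleton (Abelian.Ext X Y.obj i)) :
    Subsingleton (Abelian.Ext X (syzygy Y).obj (i + 1)) :=
  covariant_subsingleton_ext₁ (isSES_syzygy Y).shortExact hY (subsingleton_ext_pi_right X A hA)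

theorem subsingleton_ext_of_syzygy_right {X : ModuleCat.{u} A} {Y : FGModuleCat.{u} A} {i : ℕ}
    (hA : Subsingleton (Abelian.Ext X (ModuleCat.of A A) i))
    (hY : Subsingleton (Abelian.Ext X (syzygy Y).obj (i + 1))) :
    Subsingleton (Abelian.Ext X Y.obj i) :=
  covariant_subsingleton_ext₃ (isSES_syzygy Y).shortExact (subsingleton_ext_pi_right X A hA) hY

end Syzygies

section Lifting

variable {A : Type u} [CommRing A]

theorem subsingleton_ext_free_hom {ι : Type} [Finite ι] {X : Type u} [AddCommGroup X] [Module A X]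
    {Y : ModuleCat.{u} A} {n : ℕ} (h : Subsingleton (Abelian.Ext (ModuleCat.of A X) Y n)) :
    Subsingleton (Abelian.Ext (ModuleCat.of A ((ι → A) →ₗ[A] X)) Y n) := by
  have := Fintype.ofFinite ι
  classical
  rw [subsingleton_ext_of_iso_left (LinearEquiv.piRing A X ι A).toModuleIso]
  exact subsingleton_ext_pi_left X Y h

variable [IsNoetherianRing A] {X : Type u} [AddCommGroup X] [Module A X]

theorem subsingleton_ext_syzygy_left {N : FGModuleCat.{u} A} {Y : ModuleCat.{u} A}
    (hN : ∀ i, Subsingleton (Abelian.Ext N.obj Y (i + 1))) (i : ℕ) :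
    Subsingleton (Abelian.Ext (syzygy N).obj Y (i + 1)) :=
  (subsingleton_ext_syzygy_iterate_left_iff N Y 1 i).2 (hN (i + 1))

theorem subsingleton_ext_hom {N : FGModuleCat.{u} A} {Y : ModuleCat.{u} A} (d : ℕ)
    [HasInjectiveDimensionLE Y d]
    (hN : ∀ i, Subsingleton (Abelian.Ext N.obj (ModuleCat.of A X) (i + 1)))
    (hX : ∀ i, Subsingleton (Abelian.Ext (ModuleCat.of A X) Y (i + 1))) (i : ℕ) :
    Subsingleton (Abelian.Ext (ModuleCat.of A (N →ₗ[A] X)) Y (i + 1)) := by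
  suffices h : ∀ r i, d < i + 1 + r →
      Subsingleton (Abelian.Ext (ModuleCat.of A (N →ₗ[A] X)) Y (i + 1)) from
    h d i (by omega)
  -- Descending induction on the degree, starting above the injective dimension of `Y`.
  intro r
  induction r generalizing N with
  | zero => exact fun i hi ↦ HasInjectiveDimensionLT.subsingleton Y (d + 1) (i + 1) hi _
  | succ r ih =>
    intro i hi
    refine contravariant_subsingleton_ext₁ ((isSES_syzygy N).lcomp (hN 0)).shortExact
      (subsingleton_ext_free_hom (hX i)) ?_
    exact ih (subsingleton_ext_syzygy_left hN) (i + 1) (by omega)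

theorem exists_functional_of_syzygy_map {N : FGModuleCat.{u} A}
    (hN : Subsingleton (Abelian.Ext N.obj (ModuleCat.of A X) 1))
    (hN₁ : Subsingleton (Abelian.Ext (syzygy N).obj (ModuleCat.of A X) 1))
    (φ : X →ₗ[A] syzygy (syzygy N)) :
    ∃ Ψ : (syzygy (syzygy N) →ₗ[A] X) →ₗ[A] A,
      Ψ ∘ₗ (syzygyInclusion (syzygy N)).lcomp A X =
        tracePairing X _ (syzygyInclusion (syzygy N) ∘ₗ φ) := by
  have h₀ := (isSES_syzygy N).lcomp hN
  have h₁ := (isSES_syzygy (syzygy N)).lcomp hN₁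
  refine (LinearMap.exact_lcomp_of_exact_of_surjective A h₁.2.1 h₁.2.2 _).1 ?_
  ext h
  obtain ⟨h', rfl⟩ := h₀.2.2 h
  have h_zero : (syzygyInclusion N ∘ₗ cover (syzygy N)) ∘ₗ syzygyInclusion (syzygy N) ∘ₗ φ = 0 := by
    rw [LinearMap.comp_assoc, ← LinearMap.comp_assoc φ,
      (isSES_syzygy (syzygy N)).2.1.linearMap_comp_eq_zero, LinearMap.zero_comp,
      LinearMap.comp_zero]
  calc tracePairing X _ (syzygyInclusion (syzygy N) ∘ₗ φ)
        (h' ∘ₗ syzygyInclusion N ∘ₗ cover (syzygy N))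
      = tracePairing X _ ((syzygyInclusion N ∘ₗ cover (syzygy N)) ∘ₗ
          syzygyInclusion (syzygy N) ∘ₗ φ) h' := (tracePairing_comp _ _ h').symm
    _ = 0 := by rw [h_zero, map_zero, LinearMap.zero_apply]

theorem exists_cover_comp_eq {N : FGModuleCat.{u} A} (d : ℕ)
    [HasInjectiveDimensionLE (ModuleCat.of A A) d]
    (hX : ∀ i, Subsingleton (Abelian.Ext (ModuleCat.of A X) (ModuleCat.of A A) (i + 1)))
    (hN : ∀ i, Subsingleton (Abelian.Ext N.obj (ModuleCat.of A X) (i + 1)))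
    (φ : X →ₗ[A] syzygy (syzygy N)) : ∃ χ, cover (syzygy (syzygy N)) ∘ₗ χ = φ := by
  have hN₁ := subsingleton_ext_syzygy_left hN
  have hN₂ := subsingleton_ext_syzygy_left hN₁
  have hN₃ := subsingleton_ext_syzygy_left hN₂
  -- Under the trace pairing, lifting `φ` through the cover `F` of `syzygy (syzygy N)` becomes
  -- extending a functional on `Hom(syzygy (syzygy N), X)` to `Hom(F, X)`.
  obtain ⟨Ψ, hΨ⟩ := exists_functional_of_syzygy_map (hN 0) (hN₁ 0) φ
  obtain ⟨Φ, hΦ⟩ := ((isSES_syzygy _).lcomp (hN₂ 0)).lcomp_surjective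
    (subsingleton_ext_hom d hN₃ hX 0) Ψ
  obtain ⟨χ, rfl⟩ := tracePairing_surjective Φ
  have h_eq : syzygyInclusion (syzygy N) ∘ₗ cover (syzygy (syzygy N)) ∘ₗ χ =
      syzygyInclusion (syzygy N) ∘ₗ φ := by
    refine tracePairing_injective (LinearMap.ext fun h ↦ ?_)
    rw [← hΨ, ← hΦ, ← LinearMap.comp_assoc, tracePairing_comp]
    rfl
  exact ⟨χ, (LinearMap.cancel_left (isSES_syzygy _).1).1 h_eq⟩

end Lifting

section Symmetry

variable {A : Type u} [CommRing A] [IsNoetherianRing A] {M N X : FGModuleCat.{u} A}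

theorem subsingleton_ext_one_syzygy_iterate_three (d : ℕ)
    [HasInjectiveDimensionLE (ModuleCat.of A A) d]
    (hX : ∀ i, Subsingleton (Abelian.Ext X.obj (ModuleCat.of A A) (i + 1)))
    (hN : ∀ i, Subsingleton (Abelian.Ext N.obj X.obj (i + 1))) :
    Subsingleton (Abelian.Ext X.obj (syzygy^[3] N).obj 1) := by
  refine subsingleton_ext_one_of_forall_exists_comp_g_eq
    (isSES_syzygy (syzygy (syzygy N))).shortExact (subsingleton_ext_pi_right _ A (hX 0))
    fun φ ↦ ?_
  obtain ⟨χ, hχ⟩ := exists_cover_comp_eq d hX hN φ.hom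
  exact ⟨ModuleCat.ofHom χ, ModuleCat.hom_ext hχ⟩

theorem subsingleton_ext_syzygy_iterate_right (d : ℕ)
    [HasInjectiveDimensionLE (ModuleCat.of A A) d]
    (hX : ∀ i, Subsingleton (Abelian.Ext X.obj (ModuleCat.of A A) (i + 1)))
    (hN : ∀ i, Subsingleton (Abelian.Ext N.obj X.obj (i + 1))) {j n : ℕ} (hjn : j + 3 ≤ n) :
    Subsingleton (Abelian.Ext X.obj (syzygy^[n] N).obj (j + 1)) := by
  induction j generalizing n with
  | zero =>
    obtain ⟨m, rfl⟩ := Nat.exists_eq_add_of_le hjn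
    rw [zero_add, Function.iterate_add_apply]
    refine subsingleton_ext_one_syzygy_iterate_three d hX fun i ↦ ?_
    rw [subsingleton_ext_syzygy_iterate_left_iff, add_right_comm]
    exact hN (i + m)
  | succ j ih =>
    obtain ⟨m, rfl⟩ := Nat.exists_eq_add_of_le' (Nat.le_of_add_left_le hjn)
    rw [Function.iterate_succ_apply']
    exact subsingleton_ext_syzygy_right (hX (j + 1)) (ih (by omega))

theorem eventually_subsingleton_ext_syzygy_iterate_right
    (hA : ∀ᶠ i in atTop, Subsingleton (Abelian.Ext N.obj (ModuleCat.of A A) i))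
    (hM : ∀ᶠ i in atTop, Subsingleton (Abelian.Ext N.obj M.obj i)) (n : ℕ) :
    ∀ᶠ i in atTop, Subsingleton (Abelian.Ext N.obj (syzygy^[n] M).obj i) := by
  induction n with
  | zero => exact hM
  | succ n ih =>
    rw [← map_add_atTop_eq_nat 1, eventually_map, Function.iterate_succ_apply']
    filter_upwards [ih, (tendsto_add_atTop_nat 1).eventually hA] with i hMi hAi
    exact subsingleton_ext_syzygy_right hAi hMi

theorem subsingleton_ext_of_syzygy_iterate_right {d : ℕ} {Y : ModuleCat.{u} A}
    (hA : ∀ i > d, Subsingleton (Abelian.Ext Y (ModuleCat.of A A) i)) (n : ℕ)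
    (hN : ∀ i > d, Subsingleton (Abelian.Ext Y (syzygy^[n] N).obj i)) :
    ∀ i > d, Subsingleton (Abelian.Ext Y N.obj i) := by
  induction n with
  | zero => exact hN
  | succ n ih =>
    refine ih fun i hi ↦ subsingleton_ext_of_syzygy_right (hA i hi) ?_
    rw [← Function.iterate_succ_apply' syzygy]
    exact hN (i + 1) (by omega)

theorem HasBoundedExtGaps.subsingleton_ext (hM : HasBoundedExtGaps M.obj) (d : ℕ)
    [HasInjectiveDimensionLE (ModuleCat.of A A) d]
    (hNM : ∀ᶠ i in atTop, Subsingleton (Abelian.Ext N.obj M.obj i)) :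
    ∀ i > d, Subsingleton (Abelian.Ext M.obj N.obj i) := by
  have hA (Y : ModuleCat.{u} A) : ∀ i > d, Subsingleton (Abelian.Ext Y (ModuleCat.of A A) i) :=
    fun i hi ↦ HasInjectiveDimensionLT.subsingleton _ (d + 1) i hi Y
  have hX (i) : Subsingleton (Abelian.Ext (syzygy^[d] M).obj (ModuleCat.of A A) (i + 1)) :=
    (subsingleton_ext_syzygy_iterate_left_iff M _ d i).2 (hA _ _ (by omega))
  obtain ⟨k, hk⟩ := eventually_atTop.1 <|
    eventually_subsingleton_ext_syzygy_iterate_right ((eventually_gt_atTop d).mono (hA N.obj)) hNM d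
  have hN (i) : Subsingleton (Abelian.Ext (syzygy^[k] N).obj (syzygy^[d] M).obj (i + 1)) :=
    (subsingleton_ext_syzygy_iterate_left_iff N _ k i).2 (hk _ (by omega))
  obtain ⟨c, hc⟩ := hM
  refine subsingleton_ext_of_syzygy_iterate_right (hA _) (c + 3 + k) ?_
  rw [Function.iterate_add_apply]
  refine hc _ d fun i ⟨hdi, hic⟩ ↦ ?_
  obtain ⟨j, rfl⟩ : ∃ j, i = j + 1 + d := ⟨i - d - 1, by omega⟩
  exact (subsingleton_ext_syzygy_iterate_left_iff M _ d j).1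
    (subsingleton_ext_syzygy_iterate_right d hX hN (by omega))

theorem HasBoundedExtGaps.eventually_extVanish {M : Type u} [AddCommGroup M] [Module A M]
    [Module.Finite A M] (hM : HasBoundedExtGaps (ModuleCat.of A M)) (d : ℕ)
    [HasInjectiveDimensionLE (ModuleCat.of A A) d] {N : Type u} [AddCommGroup N] [Module A N]
    [Module.Finite A N] (hNM : ∀ᶠ i in atTop, extVanish A N i M) :
    ∀ᶠ i in atTop, extVanish A M i N := by
  have hNM' : ∀ᶠ i in atTop,
      Subsingleton (Abelian.Ext (ModuleCat.of A N) (ModuleCat.of A M) i) := by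
    filter_upwards [hNM, eventually_ne_atTop 0] with i hi hi₀
    exact (extVanish_iff_subsingleton_ext hi₀).1 hi
  filter_upwards [eventually_gt_atTop d] with i hi
  exact (extVanish_iff_subsingleton_ext hi.ne_bot).2 <|
    HasBoundedExtGaps.subsingleton_ext (M := .of A M) (N := .of A N) hM d hNM' i hi

end Symmetry

end ComplexityTest

theorem ext_symmetry_of_gorenstein_of_hasRedCx_general {A : Type u} [CommRing A]
    [IsNoetherianRing A] (hA : ∃ d, HasInjectiveDimensionLE (ModuleCat.of A A) d)
    {M : Type u} [AddCommGroup M] [Module A M] [Module.Finite A M]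
    (hM : HasBoundedExtGaps (ModuleCat.of A M))
    {N : Type u} [AddCommGroup N] [Module A N] [Module.Finite A N] :
    ((∀ᶠ i in atTop, extVanish A N i M) → ∀ᶠ i in atTop, extVanish A M i N) ∧
    (HasBoundedExtGaps (ModuleCat.of A N) →
      ((∀ᶠ i in atTop, extVanish A M i N) ↔ ∀ᶠ i in atTop, extVanish A N i M)) := by
  obtain ⟨d, _⟩ := hA
  exact ⟨hM.eventually_extVanish d, fun hN ↦
    ⟨hN.eventually_extVanish d, hM.eventually_extVanish d⟩⟩

/-- **Proposition 2.5 (Theorem 3.5 of [Bergh1])**: over a Gorenstein local ring `A`,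
if `M` has reducible complexity and `N` is any finitely generated module, then the
vanishing of `Ext^i_A(N,M)` for `i ≫ 0` implies the vanishing of `Ext^i_A(M,N)` for
`i ≫ 0`. In particular, symmetry in the vanishing of cohomology holds for modules
having reducible complexity. -/
theorem ext_symmetry_of_gorenstein_of_hasRedCx
    (A : Type u) [CommRing A] [IsLocalRing A] [IsNoetherianRing A]
    (hA : IsGorenstein A)
    (M : Type u) [AddCommGroup M] [Module A M] [Module.Finite A M]
    (hM : HasRedCx A M)
    (N : Type u) [AddCommGroup N] [Module A N] [Module.Finite A N] :
    ((∀ᶠ i in Filter.atTop, extVanish A N i M) →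
      (∀ᶠ i in Filter.atTop, extVanish A M i N)) ∧
    (HasRedCx A N →
      ((∀ᶠ i in Filter.atTop, extVanish A M i N) ↔
        (∀ᶠ i in Filter.atTop, extVanish A N i M))) := by
  have h := ext_symmetry_of_gorenstein_of_hasRedCx_general hA.exists_hasInjectiveDimensionLE
    hM.hasFreeRedCxCat.hasBoundedExtGaps (N := N)
  exact ⟨h.1, fun hN ↦ h.2 hN.hasFreeRedCxCat.hasBoundedExtGaps⟩
end

section
/- Let k be a field, α ∈ k a nonzero element, and A = k[X_1,…,X_5]/𝔞 where 𝔞 is generated by the quadratic forms X_1², X_2², X_5², X_3X_4, X_3X_5, X_4X_5, X_1X_4+X_2X_4, αX_1X_3+X_2X_3, X_3²−X_2X_5+αX_1X_5, X_4²−X_2X_5+X_1X_5. Then A is a local Gorenstein (selfinjective) finite-dimensional k-algebra, the complex ⋯ → A² →^{d_{n+1}} A² →^{d_n} A² → ⋯ with d_n given by the matrix ((x_1, α^n x_3 + x_4),(0, x_2)) is exact, and the module M = Im d_0 has complexity one. Moreover, if α has infinite multiplicative order in k, then M does not have reducible complexity. -/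
set_option maxHeartbeats 1000000
set_option synthInstance.maxHeartbeats 400000

open CategoryTheory Opposite Filter IsLocalRing

universe u

open ComplexityTest

namespace ComplexityTest

section Gasharov

open MvPolynomial in
/-- The Gasharov–Peeva ideal `𝔞 ⊆ k[X_1, …, X_5]` generated by the ten quadratic forms
`X_1², X_2², X_5², X_3X_4, X_3X_5, X_4X_5, X_1X_4 + X_2X_4, αX_1X_3 + X_2X_3,
X_3² - X_2X_5 + αX_1X_5, X_4² - X_2X_5 + X_1X_5` (variables indexed by `0, …, 4`). -/
noncomputable def gasharovIdeal (k : Type u) [Field k] (α : k) :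
    Ideal (MvPolynomial (Fin 5) k) :=
  Ideal.span
    {X 0 ^ 2, X 1 ^ 2, X 4 ^ 2, X 2 * X 3, X 2 * X 4, X 3 * X 4,
      X 0 * X 3 + X 1 * X 3, C α * (X 0 * X 2) + X 1 * X 2,
      X 2 ^ 2 - X 1 * X 4 + C α * (X 0 * X 4),
      X 3 ^ 2 - X 1 * X 4 + X 0 * X 4}

/-- The Gasharov–Peeva algebra `A = k[X_1, …, X_5]/𝔞`. -/
abbrev gasharovRing (k : Type u) [Field k] (α : k) : Type u :=
  MvPolynomial (Fin 5) k ⧸ gasharovIdeal k α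

/-- The image of the variable `X_i` in the Gasharov–Peeva algebra. -/
noncomputable def gx (k : Type u) [Field k] (α : k) (i : Fin 5) : gasharovRing k α :=
  Ideal.Quotient.mk (gasharovIdeal k α) (MvPolynomial.X i)

/-- The differential `d_n : A² → A²` given by the matrix
`(x_1, α^n x_3 + x_4; 0, x_2)`. -/
noncomputable def gasharovD (k : Type u) [Field k] (α : k) (n : ℤ) :
    (Fin 2 → gasharovRing k α) →ₗ[gasharovRing k α] (Fin 2 → gasharovRing k α) :=
  Matrix.toLin'
    !![gx k α 0, algebraMap k (gasharovRing k α) (α ^ n) * gx k α 2 + gx k α 3;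
       0, gx k α 1]

end Gasharov

end ComplexityTest

/-!
The algebra `A` is graded Artinian Gorenstein with Hilbert function `1, 5, 5, 1`: it is the algebra
`k ⊕ V ⊕ V* ⊕ k` of a cubic form on `V = k⁵`. In these coordinates the pairing into the socle shows
that `A` is selfinjective, and the annihilators of `x₁` and `x₂` are the ideals they generate, so
that the upper triangular matrices `d_n` form an exact complex.

Write `M_n = Im d_n`, so that `M = M_0` has syzygies `Ω^n M = M_n`. As a socle generator of `A` is
annihilated precisely by `𝔪`, a module of complexity zero is free; hence a reduction of `M` is an
exact sequence `0 → M → K → M_n → 0` with `K` free. A socle generator kills `M ⊆ 𝔪A²`, whereas the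
elements of `K` that it kills are those of `𝔪K`; so `M` lands in `𝔪K` and `M ≅ Ω M_n = M_{n+1}`.
The content ideal of the first syzygy of `M_n`, an isomorphism invariant, is generated by `x₁`, `x₂`
and `α^{n+1} x₃ + x₄`, which determines `αⁿ`. Thus `M_0 ≅ M_{n+1}` gives `α^{n+1} = 1`.
-/

namespace ComplexityTest

section LocalAlgebra

variable {A : Type*} [CommRing A]

theorem mem_smul_top_iff_repr_mem {ι F : Type*} [AddCommGroup F] [Module A F]
    (b : Module.Basis ι A F) (I : Ideal A) {x : F} :
    x ∈ I • (⊤ : Submodule A F) ↔ ∀ i, b.repr x i ∈ I := by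
  rw [← b.span_eq, Submodule.mem_ideal_smul_span_iff_exists_sum]
  constructor
  · rintro ⟨a, ha, rfl⟩ i
    rw [← Finsupp.linearCombination_apply, b.repr_linearCombination]
    exact ha i
  · exact fun h ↦ ⟨b.repr x, h, b.linearCombination_repr x⟩

theorem mem_smul_top_iff_apply_mem {ι : Type*} [Finite ι] (I : Ideal A) {x : ι → A} :
    x ∈ I • (⊤ : Submodule A (ι → A)) ↔ ∀ i, x i ∈ I := by
  simp only [mem_smul_top_iff_repr_mem (Pi.basisFun A ι), Pi.basisFun_repr]

variable [IsLocalRing A] {s : A}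

theorem smul_eq_zero_iff_mem_maximalIdeal_smul_top {F : Type*} [AddCommGroup F] [Module A F]
    [Module.Free A F] (hs : ∀ a, s * a = 0 ↔ a ∈ maximalIdeal A) {x : F} :
    s • x = 0 ↔ x ∈ maximalIdeal A • (⊤ : Submodule A F) := by
  rw [mem_smul_top_iff_repr_mem (Module.Free.chooseBasis A F),
    ← (Module.Free.chooseBasis A F).repr.map_eq_zero_iff, Finsupp.ext_iff]
  simp only [map_smul, Finsupp.smul_apply, Finsupp.zero_apply, smul_eq_mul, hs]

theorem subsingleton_of_forall_smul_eq_zero {F : Type*} [AddCommGroup F] [Module A F]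
    [Module.Free A F] (hs : ∀ a, s * a = 0 ↔ a ∈ maximalIdeal A) (h : ∀ x : F, s • x = 0) :
    Subsingleton F := by
  let b := Module.Free.chooseBasis A F
  have : IsEmpty (Module.Free.ChooseBasisIndex A F) := ⟨fun i ↦ by
    have hi := (mem_smul_top_iff_repr_mem b (maximalIdeal A)).1
      ((smul_eq_zero_iff_mem_maximalIdeal_smul_top hs).1 (h (b i))) i
    rw [b.repr_self, Finsupp.single_eq_same] at hi
    exact (Ideal.ne_top_iff_one _).1 (maximalIdeal.isMaximal A).ne_top hi⟩
  exact b.repr.toEquiv.subsingleton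

end LocalAlgebra

section MinimalCover

variable {A : Type*} [CommRing A] [IsLocalRing A]
  {F F' N N' : Type*} [AddCommGroup F] [Module A F] [AddCommGroup F'] [Module A F']
  [AddCommGroup N] [Module A N] [AddCommGroup N'] [Module A N']

/-- A minimal cover of `N`: a surjection `f : F → N` with kernel in `𝔪F`. For `F` finite free this
is the start of a minimal free resolution of `N`. -/
structure IsMinimalCover (f : F →ₗ[A] N) : Prop where
  surjective : Function.Surjective f
  ker_le : LinearMap.ker f ≤ maximalIdeal A • ⊤

namespace IsMinimalCover

theorem equiv_comp {f : F →ₗ[A] N} (hf : IsMinimalCover f) (e : N ≃ₗ[A] N') :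
    IsMinimalCover (e.toLinearMap ∘ₗ f) where
  surjective := e.surjective.comp hf.surjective
  ker_le := by simpa only [LinearEquiv.ker_comp] using hf.ker_le

theorem surjective_of_comp [Module.Finite A F'] {g : F' →ₗ[A] N} (hg : IsMinimalCover g)
    {φ : F →ₗ[A] F'} (h : Function.Surjective (g ∘ₗ φ)) : Function.Surjective φ := by
  rw [← LinearMap.range_eq_top, eq_top_iff]
  refine Submodule.le_of_le_smul_of_le_jacobson_bot Module.Finite.fg_top
    (maximalIdeal_le_jacobson _) fun y _ ↦ ?_
  obtain ⟨x, hx⟩ := h (g y)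
  have hker : y - φ x ∈ LinearMap.ker g := by
    rw [LinearMap.mem_ker, map_sub, sub_eq_zero, ← hx, LinearMap.comp_apply]
  rw [← add_sub_cancel (φ x) y]
  exact Submodule.add_mem_sup ⟨x, rfl⟩ (hg.ker_le hker)

variable [Module.Finite A F] [Module.Projective A F] [Module.Finite A F'] [Module.Projective A F']

theorem exists_equiv_comp_eq {f : F →ₗ[A] N} {g : F' →ₗ[A] N} (hf : IsMinimalCover f)
    (hg : IsMinimalCover g) : ∃ e : F ≃ₗ[A] F', g ∘ₗ e.toLinearMap = f := by
  obtain ⟨φ, hφ⟩ := Module.projective_lifting_property g f hg.surjective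
  obtain ⟨ψ, hψ⟩ := Module.projective_lifting_property f g hf.surjective
  have hφs : Function.Surjective φ := hg.surjective_of_comp (hφ ▸ hf.surjective)
  have hψs : Function.Surjective ψ := hf.surjective_of_comp (hψ ▸ hg.surjective)
  have hinj : Function.Injective (ψ ∘ₗ φ) :=
    OrzechProperty.injective_of_surjective_endomorphism _ (hψs.comp hφs)
  exact ⟨.ofBijective φ ⟨.of_comp hinj, hφs⟩, hφ⟩

theorem exists_map_ker_eq {f : F →ₗ[A] N} {g : F' →ₗ[A] N'} (hf : IsMinimalCover f)
    (hg : IsMinimalCover g) (e : N ≃ₗ[A] N') :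
    ∃ φ : F ≃ₗ[A] F', (LinearMap.ker f).map φ.toLinearMap = LinearMap.ker g := by
  obtain ⟨φ, hφ⟩ := (hf.equiv_comp e).exists_equiv_comp_eq hg
  refine ⟨φ, ?_⟩
  rw [← LinearEquiv.ker_comp e f, ← hφ, LinearMap.ker_comp]
  exact Submodule.map_comap_eq_of_surjective φ.surjective _

theorem nonempty_ker_equiv {f : F →ₗ[A] N} {g : F' →ₗ[A] N'} (hf : IsMinimalCover f)
    (hg : IsMinimalCover g) (e : N ≃ₗ[A] N') :
    Nonempty (LinearMap.ker f ≃ₗ[A] LinearMap.ker g) :=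
  let ⟨φ, hφ⟩ := hf.exists_map_ker_eq hg e
  ⟨φ.ofSubmodules _ _ hφ⟩

end IsMinimalCover

end MinimalCover

section ContentIdeal

variable {A : Type*} [CommRing A] {F F' : Type*} [AddCommGroup F] [Module A F]
  [AddCommGroup F'] [Module A F']

/-- The content ideal of a submodule `K ⊆ F`: the ideal generated by all values on `K` of linear
forms on `F`. If `F` is free of rank `r`, it is the Fitting ideal `Fitt_{r-1}(F / K)`. -/
def contentIdeal (K : Submodule A F) : Ideal A :=
  ⨆ θ : Module.Dual A F, K.map θ

theorem apply_mem_contentIdeal {K : Submodule A F} (θ : Module.Dual A F) {x : F} (hx : x ∈ K) :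
    θ x ∈ contentIdeal K :=
  le_iSup (fun θ : Module.Dual A F ↦ K.map θ) θ (Submodule.mem_map_of_mem hx)

theorem contentIdeal_le {K : Submodule A F} {I : Ideal A} :
    contentIdeal K ≤ I ↔ ∀ θ : Module.Dual A F, ∀ x ∈ K, θ x ∈ I := by
  simp only [contentIdeal, iSup_le_iff, Submodule.map_le_iff_le_comap]
  rfl

theorem contentIdeal_map_le (K : Submodule A F) (φ : F →ₗ[A] F') :
    contentIdeal (K.map φ) ≤ contentIdeal K := by
  rw [contentIdeal_le]
  rintro θ _ ⟨x, hx, rfl⟩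
  exact apply_mem_contentIdeal (θ ∘ₗ φ) hx

theorem contentIdeal_map_equiv (K : Submodule A F) (e : F ≃ₗ[A] F') :
    contentIdeal (K.map e.toLinearMap) = contentIdeal K := by
  refine (contentIdeal_map_le K _).antisymm ?_
  simpa [← Submodule.map_comp] using contentIdeal_map_le (K.map e.toLinearMap) e.symm.toLinearMap

theorem contentIdeal_range_toLin' {m n : Type*} [Finite m] [Fintype n] [DecidableEq n]
    (M : Matrix m n A) :
    contentIdeal (LinearMap.range (Matrix.toLin' M)) =
      Ideal.span (Set.range fun p : m × n ↦ M p.1 p.2) := by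
  refine le_antisymm (contentIdeal_le.2 ?_) (Ideal.span_le.2 ?_)
  · rintro θ _ ⟨v, rfl⟩
    classical
    have := Fintype.ofFinite m
    rw [LinearMap.pi_apply_eq_sum_univ θ]
    refine sum_mem fun i _ ↦ Ideal.mul_mem_right _ _ (sum_mem fun j _ ↦ ?_)
    exact Ideal.mul_mem_right _ _ (Ideal.subset_span ⟨(i, j), rfl⟩)
  · rintro _ ⟨⟨i, j⟩, rfl⟩
    have h := apply_mem_contentIdeal (LinearMap.proj i)
      (LinearMap.mem_range_self (Matrix.toLin' M) (Pi.single j 1))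
    simpa using h

theorem IsMinimalCover.contentIdeal_ker_eq [IsLocalRing A] {N N' : Type*} [AddCommGroup N]
    [Module A N] [AddCommGroup N'] [Module A N'] [Module.Finite A F] [Module.Projective A F]
    [Module.Finite A F'] [Module.Projective A F'] {f : F →ₗ[A] N} {g : F' →ₗ[A] N'}
    (hf : IsMinimalCover f) (hg : IsMinimalCover g) (e : N ≃ₗ[A] N') :
    contentIdeal (LinearMap.ker f) = contentIdeal (LinearMap.ker g) := by
  obtain ⟨φ, hφ⟩ := hf.exists_map_ker_eq hg e
  rw [← hφ, contentIdeal_map_equiv]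

end ContentIdeal

section Complexity

variable {A : Type u} [CommRing A] [IsLocalRing A]
  {M : Type u} [AddCommGroup M] [Module A M]

namespace MinFreeRes

theorem range_d_le (R : MinFreeRes A M) (n : ℕ) :
    LinearMap.range (R.d n) ≤ maximalIdeal A • ⊤ := by
  rintro _ ⟨x, rfl⟩
  exact (mem_smul_top_iff_apply_mem _).2 (R.minimal n x)

theorem isMinimalCover_aug (R : MinFreeRes A M) : IsMinimalCover R.aug where
  surjective := R.aug_surjective
  ker_le := R.exact_zero.linearMap_ker_eq ▸ R.range_d_le 0

theorem isMinimalCover_rangeRestrict_d (R : MinFreeRes A M) (n : ℕ) :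
    IsMinimalCover (R.d n).rangeRestrict where
  surjective := (R.d n).surjective_rangeRestrict
  ker_le := by
    rw [LinearMap.ker_rangeRestrict, (R.exact_succ n).linearMap_ker_eq]
    exact R.range_d_le (n + 1)

theorem nonempty_ker_aug_equiv (R R' : MinFreeRes A M) :
    Nonempty (LinearMap.ker R.aug ≃ₗ[A] LinearMap.ker R'.aug) :=
  R.isMinimalCover_aug.nonempty_ker_equiv R'.isMinimalCover_aug (.refl A M)

theorem nonempty_range_d_equiv (R R' : MinFreeRes A M) (n : ℕ) :
    Nonempty (LinearMap.range (R.d n) ≃ₗ[A] LinearMap.range (R'.d n)) := by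
  induction n with
  | zero =>
    rw [← R.exact_zero.linearMap_ker_eq, ← R'.exact_zero.linearMap_ker_eq]
    exact R.nonempty_ker_aug_equiv R'
  | succ n ih =>
    obtain ⟨e⟩ := ih
    rw [← (R.exact_succ n).linearMap_ker_eq, ← (R'.exact_succ n).linearMap_ker_eq]
    have h := (R.isMinimalCover_rangeRestrict_d n).nonempty_ker_equiv
      (R'.isMinimalCover_rangeRestrict_d n) e
    rwa [LinearMap.ker_rangeRestrict, LinearMap.ker_rangeRestrict] at h

theorem subsingleton_of_subsingleton_succ {s : A} (hs : ∀ a, s * a = 0 ↔ a ∈ maximalIdeal A)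
    (R : MinFreeRes A M) {n : ℕ} (h : Subsingleton (Fin (R.b (n + 2)) → A)) :
    Subsingleton (Fin (R.b (n + 1)) → A) := by
  refine subsingleton_of_forall_smul_eq_zero hs fun x ↦ ?_
  have hd : R.d n (s • x) = 0 := by
    rw [map_smul, smul_eq_zero_iff_mem_maximalIdeal_smul_top hs]
    exact R.range_d_le n ⟨x, rfl⟩
  obtain ⟨y, hy⟩ := (R.exact_succ n _).1 hd
  rw [← hy, Subsingleton.elim y 0, map_zero]

theorem bijective_aug_of_b_eq_zero {s : A} (hs : ∀ a, s * a = 0 ↔ a ∈ maximalIdeal A)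
    (R : MinFreeRes A M) {n : ℕ} (h : R.b (n + 1) = 0) : Function.Bijective R.aug := by
  have hsub : Subsingleton (Fin (R.b (n + 1)) → A) := by rw [h]; infer_instance
  clear h
  induction n with
  | zero =>
    refine ⟨(injective_iff_map_eq_zero _).2 fun x hx ↦ ?_, R.aug_surjective⟩
    obtain ⟨y, rfl⟩ := (R.exact_zero x).1 hx
    rw [Subsingleton.elim y 0, map_zero]
  | succ n ih => exact ih (R.subsingleton_of_subsingleton_succ hs hsub)

end MinFreeRes

theorem IsSES.isMinimalCover {K N : Type u} [AddCommGroup K] [Module A K] [Module.Free A K]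
    [AddCommGroup N] [Module A N] {f : M →ₗ[A] K} {g : K →ₗ[A] N} (h : IsSES f g) {s : A}
    (hs : ∀ a, s * a = 0 ↔ a ∈ maximalIdeal A) (hM : ∀ x : M, s • x = 0) : IsMinimalCover g where
  surjective := h.2.2
  ker_le := by
    rw [h.2.1.linearMap_ker_eq]
    rintro _ ⟨x, rfl⟩
    rw [← smul_eq_zero_iff_mem_maximalIdeal_smul_top hs, ← map_smul, hM, map_zero]

theorem hasComplexityLE_one_of_b_le (R : MinFreeRes A M) {c : ℕ} (h : ∀ n, R.b n ≤ c) :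
    HasComplexityLE A M 1 :=
  ⟨R, c, Eventually.of_forall fun n ↦ by simpa using h n⟩

theorem complexity_le {t : ℕ} (h : HasComplexityLE A M t) : complexity A M ≤ t :=
  sInf_le ⟨t, rfl, h⟩

theorem hasComplexityLE_zero_of_complexity_eq_zero (h : complexity A M = 0) :
    HasComplexityLE A M 0 := by
  have hne : {c : ℕ∞ | ∃ t : ℕ, c = t ∧ HasComplexityLE A M t}.Nonempty := by
    rw [Set.nonempty_iff_ne_empty]
    intro hempty
    rw [complexity, hempty, sInf_empty] at h
    exact ENat.top_ne_zero h
  obtain ⟨t, ht, hM⟩ := csInf_mem hne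
  obtain rfl : t = 0 := by exact_mod_cast ht.symm.trans h
  exact hM

theorem complexity_eq_zero_of_hasFiniteProjDim (h : HasFiniteProjDim A M) :
    complexity A M = 0 := by
  obtain ⟨t, R, hR⟩ := h
  refine nonpos_iff_eq_zero.1 (complexity_le ⟨R, 0, ?_⟩)
  filter_upwards [eventually_gt_atTop t] with n hn
  simp [hR n hn]

theorem HasComplexityLE.exists_b_succ_eq_zero (h : HasComplexityLE A M 0) :
    ∃ (R : MinFreeRes A M) (n : ℕ), R.b (n + 1) = 0 := by
  obtain ⟨R, a, hR⟩ := h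
  have hlim : Tendsto (fun n : ℕ ↦ a * (n : ℝ) ^ (((0 : ℕ) : ℤ) - 1)) atTop (nhds 0) := by
    simpa using (tendsto_inv_atTop_nhds_zero_nat (𝕜 := ℝ)).const_mul a
  have hsmall : ∀ᶠ n in atTop, R.b n = 0 := by
    filter_upwards [hR, hlim.eventually_lt_const one_pos] with n hn hn'
    exact Nat.lt_one_iff.1 (by exact_mod_cast hn.trans_lt hn')
  exact ⟨R, ((tendsto_add_atTop_nat 1).eventually hsmall).exists⟩

theorem free_and_finite_of_complexity_eq_zero {s : A}
    (hs : ∀ a, s * a = 0 ↔ a ∈ maximalIdeal A) (h : complexity A M = 0) :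
    Module.Free A M ∧ Module.Finite A M := by
  obtain ⟨R, n, hn⟩ := (hasComplexityLE_zero_of_complexity_eq_zero h).exists_b_succ_eq_zero
  let e := LinearEquiv.ofBijective R.aug (R.bijective_aug_of_b_eq_zero hs hn)
  exact ⟨.of_equiv e, .equiv e⟩

theorem HasRedCxCat.hasFreeRedCxCat_s15 {M : ModuleCat.{u} A} (h : HasRedCxCat M) :
    HasFreeRedCxCat M := by
  induction h with
  | of_finite_projDim M hfg h => exact .of_finite_projDim M hfg h
  | step M K S n hfg hKfg hpos hfin hsyz f g hses hcx _ _ ih =>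
    exact .step M K S n hfg hKfg hpos hfin hsyz f g hses hcx ih

theorem HasFreeRedCx.exists_ses {s : A} (hs : ∀ a, s * a = 0 ↔ a ∈ maximalIdeal A)
    (h : HasFreeRedCx A M) (hcx : complexity A M = 1) :
    ∃ (K S : ModuleCat.{u} A) (n : ℕ) (f : M →ₗ[A] K) (g : K →ₗ[A] S),
      Module.Free A K ∧ Module.Finite A K ∧ IsSyzygyOf A M S n ∧ IsSES f g := by
  cases h with
  | of_finite_projDim _ _ hpd =>
    exact absurd (hcx.symm.trans (complexity_eq_zero_of_hasFiniteProjDim hpd)) one_ne_zero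
  | step _ K S n _ _ _ _ hsyz f g hses hcxK _ =>
    have hcx' : complexity A (ModuleCat.of A M) = 1 := hcx
    obtain ⟨hfree, hfinite⟩ :=
      free_and_finite_of_complexity_eq_zero hs (hcxK.trans (by rw [hcx']; rfl))
    exact ⟨K, S, n, f, g, hfree, hfinite, hsyz, hses⟩

end Complexity

section Frobenius

variable {k A : Type*} [Field k] [CommRing A] [Algebra k A] [Module.Finite k A]

theorem exists_forall_apply_mul_eq {φ : A →ₗ[k] k} (hφ : ∀ a, (∀ b, φ (a * b) = 0) → a = 0)
    (ψ : Module.Dual k A) : ∃ c, ∀ a, φ (c * a) = ψ a := by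
  let T : A →ₗ[k] Module.Dual k A := (LinearMap.mul k A).compr₂ φ
  have hinj : Function.Injective T :=
    (injective_iff_map_eq_zero T).2 fun a ha ↦ hφ a (LinearMap.congr_fun ha)
  have hsurj : Function.Surjective T :=
    (LinearMap.injective_iff_surjective_of_finrank_eq_finrank Subspace.dual_finrank_eq.symm).1 hinj
  obtain ⟨c, hc⟩ := hsurj ψ
  exact ⟨c, LinearMap.congr_fun hc⟩

theorem injective_of_frobenius_form {φ : A →ₗ[k] k} (hφ : ∀ a, (∀ b, φ (a * b) = 0) → a = 0) :
    Module.Injective A A := by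
  refine Module.Baer.injective fun I g ↦ ?_
  obtain ⟨ψ, hψ⟩ := LinearMap.exists_extend (p := I.restrictScalars k) (φ ∘ₗ g.restrictScalars k)
  obtain ⟨c, hc⟩ := exists_forall_apply_mul_eq hφ ψ
  have hφg (z : I) : φ (c * z) = φ (g z) := (hc z).trans (LinearMap.congr_fun hψ z)
  refine ⟨LinearMap.mulLeft A c, fun x hx ↦ sub_eq_zero.1 (hφ _ fun b ↦ ?_)⟩
  have hbx := hφg (b • ⟨x, hx⟩)
  rw [map_smul, smul_eq_mul, Submodule.coe_smul, smul_eq_mul] at hbx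
  rw [LinearMap.mulLeft_apply, sub_mul, map_sub, sub_eq_zero, mul_assoc, mul_comm x, hbx, mul_comm]

end Frobenius

section UpperTriangular

variable {A : Type*} [CommRing A]

theorem toLin'_upperTriangular_apply (x z y : A) (v : Fin 2 → A) :
    Matrix.toLin' !![x, z; 0, y] v = ![x * v 0 + z * v 1, y * v 1] := by
  rw [Matrix.toLin'_apply]
  ext i
  fin_cases i <;> simp [Matrix.mulVec_eq_sum, mul_comm]

theorem exact_toLin'_of_annihilator_eq {x y z w : A}
    (hx : ∀ {a}, x * a = 0 ↔ x ∣ a) (hy : ∀ {a}, y * a = 0 ↔ y ∣ a) (h : x * w + z * y = 0) :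
    Function.Exact (Matrix.toLin' !![x, w; 0, y]) (Matrix.toLin' !![x, z; 0, y]) := by
  intro v
  simp only [Set.mem_range, toLin'_upperTriangular_apply, funext_iff, Fin.forall_fin_two,
    Matrix.cons_val_zero, Matrix.cons_val_one, Pi.zero_apply]
  constructor
  · rintro ⟨hv0, hv1⟩
    obtain ⟨c, hc⟩ := hy.1 hv1
    obtain ⟨d, hd⟩ : x ∣ v 0 - w * c := hx.1 (by linear_combination hv0 - z * hc - c * h)
    exact ⟨![d, c], (sub_eq_iff_eq_add.1 hd).symm, hc.symm⟩
  · rintro ⟨c, hc0, hc1⟩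
    have hxx : x * x = 0 := hx.2 dvd_rfl
    have hyy : y * y = 0 := hy.2 dvd_rfl
    rw [← hc0, ← hc1]
    exact ⟨by linear_combination c 0 * hxx + c 1 * h, by linear_combination c 1 * hyy⟩

end UpperTriangular

section CubicAlgebra

/-- A symmetric trilinear form on `V`, i.e. the polarisation of a cubic form. -/
structure SymmTrilinForm (R V : Type*) [CommRing R] [AddCommGroup V] [Module R V] where
  toLin : V →ₗ[R] V →ₗ[R] Module.Dual R V
  swap_left (u v w : V) : toLin u v w = toLin v u w
  swap_right (u v w : V) : toLin u v w = toLin u w v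

section Ring

variable {R V : Type*} [CommRing R] [AddCommGroup V] [Module R V]

/-- The graded algebra `R ⊕ V ⊕ V* ⊕ R` of a symmetric trilinear form `T`: the product of two
elements `u`, `v` of `V` is `T u v` in `V*`, and `V` is paired with `V*` by evaluation. It is a
coordinate model of the algebra whose Macaulay inverse system is the cubic form of `T`. -/
def CubicAlgebra (_ : SymmTrilinForm R V) : Type _ := R × V × Module.Dual R V × R

namespace CubicAlgebra

variable {T : SymmTrilinForm R V}

instance : AddCommGroup (CubicAlgebra T) := inferInstanceAs (AddCommGroup (R × V × _ × R))

instance : Module R (CubicAlgebra T) := inferInstanceAs (Module R (R × V × _ × R))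

/-- The component of degree `0`. -/
def const : CubicAlgebra T →ₗ[R] R := LinearMap.fst R R (V × Module.Dual R V × R)

/-- The component of degree `1`. -/
def lin : CubicAlgebra T →ₗ[R] V :=
  LinearMap.fst R V (Module.Dual R V × R) ∘ₗ LinearMap.snd R R (V × Module.Dual R V × R)

/-- The component of degree `2`. -/
def quad : CubicAlgebra T →ₗ[R] Module.Dual R V :=
  LinearMap.fst R (Module.Dual R V) R ∘ₗ LinearMap.snd R V (Module.Dual R V × R) ∘ₗ
    LinearMap.snd R R (V × Module.Dual R V × R)

/-- The component of degree `3`. -/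
def cub : CubicAlgebra T →ₗ[R] R :=
  LinearMap.snd R (Module.Dual R V) R ∘ₗ LinearMap.snd R V (Module.Dual R V × R) ∘ₗ
    LinearMap.snd R R (V × Module.Dual R V × R)

variable (T) in
/-- The element of the algebra with the given components. -/
def mk (a : R) (v : V) (f : Module.Dual R V) (c : R) : CubicAlgebra T := (a, v, f, c)

section mk

variable (a : R) (v : V) (f : Module.Dual R V) (c : R)

@[simp] theorem const_mk : const (mk T a v f c) = a := rfl
@[simp] theorem lin_mk : lin (mk T a v f c) = v := rfl
@[simp] theorem quad_mk : quad (mk T a v f c) = f := rfl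
@[simp] theorem cub_mk : cub (mk T a v f c) = c := rfl

end mk

@[ext]
theorem ext {b b' : CubicAlgebra T} (hconst : const b = const b') (hlin : lin b = lin b')
    (hquad : quad b = quad b') (hcub : cub b = cub b') : b = b' :=
  Prod.ext hconst (Prod.ext hlin (Prod.ext hquad hcub))

instance : One (CubicAlgebra T) := ⟨mk T 1 0 0 0⟩

instance : Mul (CubicAlgebra T) where
  mul b b' := mk T (const b * const b') (const b • lin b' + const b' • lin b)
    (const b • quad b' + const b' • quad b + T.toLin (lin b) (lin b'))
    (const b * cub b' + const b' * cub b + quad b (lin b') + quad b' (lin b))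

section mul

variable (b b' : CubicAlgebra T)

@[simp] theorem const_one : const (1 : CubicAlgebra T) = 1 := rfl
@[simp] theorem lin_one : lin (1 : CubicAlgebra T) = 0 := rfl
@[simp] theorem quad_one : quad (1 : CubicAlgebra T) = 0 := rfl
@[simp] theorem cub_one : cub (1 : CubicAlgebra T) = 0 := rfl

@[simp] theorem const_mul : const (b * b') = const b * const b' := rfl

@[simp] theorem lin_mul : lin (b * b') = const b • lin b' + const b' • lin b := rfl

@[simp] theorem quad_mul :
    quad (b * b') = const b • quad b' + const b' • quad b + T.toLin (lin b) (lin b') := rfl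

@[simp] theorem cub_mul :
    cub (b * b') = const b * cub b' + const b' * cub b + quad b (lin b') + quad b' (lin b) := rfl

end mul

protected theorem mul_comm (b b' : CubicAlgebra T) : b * b' = b' * b := by
  ext v
  · exact _root_.mul_comm _ _
  · exact add_comm _ _
  · simp only [quad_mul, LinearMap.add_apply, T.swap_left (lin b)]
    ring
  · simp only [cub_mul]
    ring

-- Associativity in degree `3` on linear components is the symmetry `T u v w = T v w u`.
protected theorem mul_assoc (b b' b'' : CubicAlgebra T) : b * b' * b'' = b * (b' * b'') := by
  ext v
  · exact _root_.mul_assoc _ _ _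
  · simp only [lin_mul, const_mul]
    module
  · simp only [quad_mul, lin_mul, const_mul, map_add, map_smul, LinearMap.add_apply,
      LinearMap.smul_apply, smul_eq_mul]
    ring
  · simp only [cub_mul, quad_mul, lin_mul, const_mul, map_add, map_smul, LinearMap.add_apply,
      LinearMap.smul_apply, smul_eq_mul, T.swap_left (lin b), T.swap_right (lin b') (lin b)]
    ring

protected theorem mul_add (b b' b'' : CubicAlgebra T) : b * (b' + b'') = b * b' + b * b'' := by
  ext v
  · simp only [const_mul, map_add, _root_.mul_add]
  · simp only [lin_mul, map_add]
    module
  · simp only [quad_mul, map_add, LinearMap.add_apply, LinearMap.smul_apply, smul_eq_mul]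
    ring
  · simp only [cub_mul, map_add, LinearMap.add_apply]
    ring

protected theorem one_mul (b : CubicAlgebra T) : 1 * b = b := by
  ext v <;> simp

instance : CommRing (CubicAlgebra T) where
  __ := (inferInstance : AddCommGroup (CubicAlgebra T))
  zero_mul b := by ext v <;> simp
  mul_zero b := by ext v <;> simp
  mul_assoc := CubicAlgebra.mul_assoc
  mul_comm := CubicAlgebra.mul_comm
  one_mul := CubicAlgebra.one_mul
  mul_one b := by rw [CubicAlgebra.mul_comm, CubicAlgebra.one_mul]
  left_distrib := CubicAlgebra.mul_add
  right_distrib b b' b'' := by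
    simp only [CubicAlgebra.mul_comm _ b'', CubicAlgebra.mul_add]

theorem smul_mul (r : R) (b b' : CubicAlgebra T) : r • b * b' = r • (b * b') := by
  ext v
  · simp only [const_mul, map_smul, smul_eq_mul, mul_assoc]
  · simp only [lin_mul, map_smul, smul_eq_mul]
    module
  · simp only [quad_mul, map_smul, LinearMap.add_apply, LinearMap.smul_apply, smul_eq_mul]
    ring
  · simp only [cub_mul, map_smul, LinearMap.smul_apply, smul_eq_mul]
    ring

instance : Algebra R (CubicAlgebra T) :=
  .ofModule smul_mul fun r b b' ↦ by rw [mul_comm, smul_mul, mul_comm]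

theorem const_eq_zero_and_lin_mem_of_mem_span {W : Submodule R V} {B : Set (CubicAlgebra T)}
    (hB : ∀ b ∈ B, const b = 0 ∧ lin b ∈ W) {b : CubicAlgebra T} (hb : b ∈ Ideal.span B) :
    const b = 0 ∧ lin b ∈ W := by
  induction hb using Submodule.span_induction with
  | mem b hb => exact hB b hb
  | zero => simp
  | add b b' _ _ h h' => exact ⟨by simp [h, h'], by simpa using add_mem h.2 h'.2⟩
  | smul a b _ h => exact ⟨by simp [h], by simpa [h.1] using W.smul_mem _ h.2⟩

variable (T) in
/-- The augmentation: the projection to degree `0` as a ring homomorphism. -/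
def constHom : CubicAlgebra T →+* R := (AlgHom.ofLinearMap const const_one const_mul).toRingHom

theorem pow_four_eq_zero {b : CubicAlgebra T} (h : const b = 0) : b ^ 4 = 0 := by
  rw [pow_succ, pow_succ, sq]
  ext v <;> simp [h]

variable (T) in
/-- The inclusion of the component of degree `1`. -/
def ofLin (v : V) : CubicAlgebra T := mk T 0 v 0 0

end CubicAlgebra

end Ring

theorem SymmTrilinForm.range_toLin {k V : Type*} [Field k] [AddCommGroup V] [Module k V]
    [Module.Finite k V] (T : SymmTrilinForm k V) (u : V) :
    LinearMap.range (T.toLin u) = (LinearMap.ker (T.toLin u)).dualAnnihilator := by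
  rw [← LinearMap.range_dualMap_eq_dualAnnihilator_ker,
    ← (Module.evalEquiv k V).range_comp (T.toLin u).dualMap]
  congr 1
  ext w v
  exact T.swap_right u w v

namespace CubicAlgebra

variable {k V : Type*} [Field k] [AddCommGroup V] [Module k V] {T : SymmTrilinForm k V}

instance [Module.Finite k V] : Module.Finite k (CubicAlgebra T) :=
  inferInstanceAs (Module.Finite k (k × V × Module.Dual k V × k))

instance : IsLocalHom (constHom T) where
  map_nonunit b hb := by
    have hnil : IsNilpotent (b - algebraMap k _ (const b)) := by
      refine ⟨4, pow_four_eq_zero ?_⟩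
      rw [map_sub, Algebra.algebraMap_eq_smul_one, map_smul, const_one, smul_eq_mul, mul_one,
        sub_self]
    rw [← sub_add_cancel b (algebraMap k _ (const b))]
    exact hnil.isUnit_add_right_of_commute (hb.map (algebraMap k _)) (.all _ _)

instance : IsLocalRing (CubicAlgebra T) := (constHom T).domain_isLocalRing

theorem mem_maximalIdeal_iff {b : CubicAlgebra T} :
    b ∈ maximalIdeal (CubicAlgebra T) ↔ const b = 0 := by
  rw [IsLocalRing.mem_maximalIdeal, mem_nonunits_iff, ← isUnit_map_iff (constHom T),
    isUnit_iff_ne_zero, not_not]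
  rfl

theorem mk_cub_mul_eq_zero {b : CubicAlgebra T} :
    mk T 0 0 0 1 * b = 0 ↔ b ∈ maximalIdeal (CubicAlgebra T) := by
  rw [mem_maximalIdeal_iff]
  constructor
  · intro h
    simpa using congr(cub $h)
  · intro h
    ext v <;> simp [h]

theorem eq_zero_of_forall_cub_mul_eq_zero {b : CubicAlgebra T} (h : ∀ b', cub (b * b') = 0) :
    b = 0 := by
  ext v
  · simpa using h (mk T 0 0 0 1)
  · refine (Module.forall_dual_apply_eq_zero_iff k _).1 fun f ↦ ?_
    simpa using h (mk T 0 0 f 0)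
  · simpa using h (mk T 0 v 0 0)
  · simpa using h 1

theorem ofLin_mul_eq_zero_iff_dvd [Module.Finite k V] {u : V} (hu : u ≠ 0)
    (hker : LinearMap.ker (T.toLin u) = k ∙ u) {b : CubicAlgebra T} :
    ofLin T u * b = 0 ↔ ofLin T u ∣ b := by
  constructor
  · intro h
    have hconst : const b = 0 := by simpa [ofLin, hu] using congr(lin $h)
    obtain ⟨c, hlin⟩ : ∃ c : k, c • u = lin b := by
      rw [← Submodule.mem_span_singleton, ← hker]
      simpa [ofLin] using congr(quad $h)
    obtain ⟨w, hquad⟩ : quad b ∈ LinearMap.range (T.toLin u) := by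
      rw [T.range_toLin, hker, Submodule.mem_dualAnnihilator]
      intro v hv
      obtain ⟨r, rfl⟩ := Submodule.mem_span_singleton.1 hv
      have hu : quad b u = 0 := by simpa [ofLin] using congr(cub $h)
      rw [map_smul, hu, smul_zero]
    obtain ⟨g, hg⟩ := Module.Projective.exists_dual_eq_one k hu
    refine ⟨mk T c w (cub b • g) 0, ?_⟩
    ext v <;> simp [ofLin, hconst, hlin, hquad, hg]
  · rintro ⟨c, rfl⟩
    have huu : T.toLin u u = 0 := by
      rw [← LinearMap.mem_ker, hker]
      exact Submodule.mem_span_singleton_self u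
    rw [← mul_assoc]
    ext v <;> simp [ofLin, huu]

end CubicAlgebra

namespace CubicAlgebra

variable {k ι A : Type*} [CommRing k] [Fintype ι] [DecidableEq ι] [CommRing A] [Algebra k A]
  {T : SymmTrilinForm k (ι → k)}

variable (T) in
/-- The degree `1` generators of the algebra of a trilinear form on `ι → k`. -/
def var (i : ι) : CubicAlgebra T := ofLin T (Pi.single i 1)

/-- The linear map sending the standard basis of the algebra of `T` to `1`, `x i`, `q i` and `s`. -/
def linearLift (x q : ι → A) (s : A) : CubicAlgebra T →ₗ[k] A where
  toFun b := const b • 1 + ∑ i, lin b i • x i + ∑ i, quad b (Pi.single i 1) • q i + cub b • s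
  map_add' b b' := by
    simp only [map_add, Pi.add_apply, LinearMap.add_apply, add_smul, Finset.sum_add_distrib]
    abel
  map_smul' r b := by
    simp only [map_smul, Pi.smul_apply, LinearMap.smul_apply, smul_add, Finset.smul_sum, smul_assoc,
      RingHom.id_apply]

variable {x q : ι → A} {s : A}

theorem linearLift_mul_var
    (hx : ∀ i j, x i * x j =
      ∑ l, T.toLin (Pi.single i 1) (Pi.single j 1) (Pi.single l 1) • q l)
    (hq : ∀ i j, q i * x j = if i = j then s else 0) (hs : ∀ i, s * x i = 0)
    (b : CubicAlgebra T) (i : ι) :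
    linearLift x q s b * x i = linearLift x q s (b * var T i) := by
  have hlin : ∑ l, T.toLin (lin b) (Pi.single i 1) (Pi.single l 1) • q l =
      ∑ j, lin b j • (x j * x i) := by
    simp_rw [hx, Finset.smul_sum]
    rw [Finset.sum_comm]
    refine Finset.sum_congr rfl fun l _ ↦ ?_
    conv_lhs => rw [pi_eq_sum_univ' (lin b)]
    simp [Finset.sum_smul, smul_smul, LinearMap.sum_apply]
  simp [linearLift, var, ofLin, add_mul, Finset.sum_mul, hq, hs, hlin, Pi.single_apply]

theorem linearLift_surjective (hgen : Algebra.adjoin k (Set.range x) = ⊤)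
    (hmul : ∀ b i, linearLift x q s b * x i = linearLift x q s (b * var T i)) :
    Function.Surjective (linearLift x q s : CubicAlgebra T →ₗ[k] A) := by
  have hrange (a : A) : ∀ y ∈ LinearMap.range (linearLift x q s : CubicAlgebra T →ₗ[k] A),
      y * a ∈ LinearMap.range (linearLift x q s : CubicAlgebra T →ₗ[k] A) := by
    induction hgen ▸ Algebra.mem_top (R := k) (x := a) using Algebra.adjoin_induction with
    | mem a ha =>
      obtain ⟨i, rfl⟩ := ha
      rintro _ ⟨b, rfl⟩
      exact ⟨_, (hmul b i).symm⟩
    | algebraMap r =>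
      intro y hy
      rw [mul_comm, ← Algebra.smul_def]
      exact Submodule.smul_mem _ r hy
    | add a a' _ _ ha ha' => exact fun y hy ↦ mul_add y a a' ▸ add_mem (ha y hy) (ha' y hy)
    | mul a a' _ _ ha ha' => exact fun y hy ↦ mul_assoc y a a' ▸ ha' _ (ha y hy)
  exact fun a ↦ one_mul a ▸ hrange a 1 ⟨1, by simp [linearLift]⟩

theorem apply_linearLift {F : A →ₐ[k] CubicAlgebra T} (hx : ∀ i, F (x i) = var T i)
    (hq : ∀ i, F (q i) = mk T 0 0 (LinearMap.proj i) 0) (hs : F s = mk T 0 0 0 1)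
    (b : CubicAlgebra T) : F (linearLift x q s b) = b := by
  ext i
  · simp [linearLift, hx, hq, hs, var, ofLin]
  · simp [linearLift, hx, hq, hs, var, ofLin, Pi.single_apply]
  · simp [linearLift, hx, hq, hs, var, ofLin, Pi.single_apply]
  · simp [linearLift, hx, hq, hs, var, ofLin]

end CubicAlgebra

end CubicAlgebra

section Gasharov

section Relations

variable {k : Type*} [CommRing k] (α : k)

/-- The polarisation of the cubic form `X₀X₁X₄ + (X₀ - αX₁)X₂⁽²⁾ + (X₀ - X₁)X₃⁽²⁾` (divided powers),
the Macaulay inverse system of the Gasharov–Peeva algebra. -/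
def gasharovForm : SymmTrilinForm k (Fin 5 → k) where
  toLin :=
    let X (i : Fin 5) : Module.Dual k (Fin 5 → k) := LinearMap.proj i
    let tensor (f g h : Module.Dual k (Fin 5 → k)) := f.smulRight (g.smulRight h)
    let mulSq (f g : Module.Dual k (Fin 5 → k)) := tensor f g g + tensor g f g + tensor g g f
    tensor (X 0) (X 1) (X 4) + tensor (X 0) (X 4) (X 1) + tensor (X 1) (X 0) (X 4) +
      tensor (X 1) (X 4) (X 0) + tensor (X 4) (X 0) (X 1) + tensor (X 4) (X 1) (X 0) +
      mulSq (X 0 - α • X 1) (X 2) + mulSq (X 0 - X 1) (X 3)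
  swap_left u v w := by
    simp only [LinearMap.add_apply, LinearMap.smulRight_apply, LinearMap.smul_apply, smul_eq_mul]
    ring
  swap_right u v w := by
    simp only [LinearMap.add_apply, LinearMap.smulRight_apply, LinearMap.smul_apply, smul_eq_mul]
    ring

theorem gasharovForm_apply (u v w : Fin 5 → k) :
    (gasharovForm α).toLin u v w =
      (v 1 * w 4 + v 4 * w 1 + v 2 * w 2 + v 3 * w 3) * u 0 +
      (v 0 * w 4 + v 4 * w 0 - α * (v 2 * w 2) - v 3 * w 3) * u 1 +
      ((v 0 - α * v 1) * w 2 + v 2 * (w 0 - α * w 1)) * u 2 +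
      ((v 0 - v 1) * w 3 + v 3 * (w 0 - w 1)) * u 3 +
      (v 0 * w 1 + v 1 * w 0) * u 4 := by
  simp only [gasharovForm, LinearMap.add_apply, LinearMap.smulRight_apply, LinearMap.smul_apply,
    LinearMap.sub_apply, LinearMap.proj_apply, smul_eq_mul]
  ring

/-- The ten quadratic relations defining the Gasharov–Peeva algebra, for elements of an arbitrary
algebra. -/
structure GasharovRelations {A : Type*} [CommRing A] [Algebra k A] (x : Fin 5 → A) : Prop where
  x00 : x 0 ^ 2 = 0
  x11 : x 1 ^ 2 = 0
  x44 : x 4 ^ 2 = 0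
  x23 : x 2 * x 3 = 0
  x24 : x 2 * x 4 = 0
  x34 : x 3 * x 4 = 0
  x03 : x 0 * x 3 + x 1 * x 3 = 0
  x02 : algebraMap k A α * (x 0 * x 2) + x 1 * x 2 = 0
  x22 : x 2 ^ 2 - x 1 * x 4 + algebraMap k A α * (x 0 * x 4) = 0
  x33 : x 3 ^ 2 - x 1 * x 4 + x 0 * x 4 = 0

variable {A : Type*} [CommRing A]

/-- For the generators `x` of the Gasharov–Peeva algebra, the basis of the quadratic part dual to
`x` with respect to the product into the socle. -/
def dualQuadric (x : Fin 5 → A) : Fin 5 → A :=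
  ![x 1 * x 4, x 0 * x 4, x 0 * x 2, x 0 * x 3, x 0 * x 1]

namespace GasharovRelations

variable {α} [Algebra k A] {x : Fin 5 → A} (hx : GasharovRelations α x)

include hx

theorem mul_eq_sum_dualQuadric (i j : Fin 5) :
    x i * x j = ∑ l, (gasharovForm α).toLin (Pi.single i 1) (Pi.single j 1) (Pi.single l 1) •
      dualQuadric x l := by
  obtain ⟨h00, h11, h44, h23, h24, h34, h03, h02, h22, h33⟩ := hx
  fin_cases i <;> fin_cases j <;>
    simp [gasharovForm_apply, Fin.sum_univ_five, dualQuadric, Algebra.smul_def] <;> grind only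

theorem dualQuadric_mul (i j : Fin 5) :
    dualQuadric x i * x j = if i = j then x 0 * x 1 * x 4 else 0 := by
  obtain ⟨h00, h11, h44, h23, h24, h34, h03, h02, h22, h33⟩ := hx
  fin_cases i <;> fin_cases j <;> simp [dualQuadric] <;> grind only

theorem socle_mul (i : Fin 5) : x 0 * x 1 * x 4 * x i = 0 := by
  obtain ⟨h00, h11, h44, -, h24, h34, -, -, -, -⟩ := hx
  fin_cases i <;> simp <;> grind only

omit hx in
theorem var : GasharovRelations α (CubicAlgebra.var (gasharovForm α)) where
  x00 := by ext w <;> simp [CubicAlgebra.var, CubicAlgebra.ofLin, gasharovForm_apply, sq]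
  x11 := by ext w <;> simp [CubicAlgebra.var, CubicAlgebra.ofLin, gasharovForm_apply, sq]
  x44 := by ext w <;> simp [CubicAlgebra.var, CubicAlgebra.ofLin, gasharovForm_apply, sq]
  x23 := by ext w <;> simp [CubicAlgebra.var, CubicAlgebra.ofLin, gasharovForm_apply]
  x24 := by ext w <;> simp [CubicAlgebra.var, CubicAlgebra.ofLin, gasharovForm_apply]
  x34 := by ext w <;> simp [CubicAlgebra.var, CubicAlgebra.ofLin, gasharovForm_apply]
  x03 := by ext w <;> simp [CubicAlgebra.var, CubicAlgebra.ofLin, gasharovForm_apply]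
  x02 := by
    rw [← Algebra.smul_def]
    ext w <;> simp [CubicAlgebra.var, CubicAlgebra.ofLin, gasharovForm_apply]
  x22 := by
    rw [← Algebra.smul_def]
    ext w <;> simp [CubicAlgebra.var, CubicAlgebra.ofLin, gasharovForm_apply, sq]
  x33 := by
    ext w <;> simp [CubicAlgebra.var, CubicAlgebra.ofLin, gasharovForm_apply, sq]

end GasharovRelations

end Relations

section Equiv

open CubicAlgebra

theorem dualQuadric_var {k : Type*} [CommRing k] (α : k) (l : Fin 5) :
    dualQuadric (var (gasharovForm α)) l = mk (gasharovForm α) 0 0 (LinearMap.proj l) 0 := by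
  fin_cases l <;> ext w <;> simp [dualQuadric, var, ofLin, gasharovForm_apply]

theorem socle_var {k : Type*} [CommRing k] (α : k) :
    var (gasharovForm α) 0 * var (gasharovForm α) 1 * var (gasharovForm α) 4 =
      mk (gasharovForm α) 0 0 0 1 := by
  ext w <;> simp [var, ofLin, gasharovForm_apply]

variable (k : Type u) [Field k] (α : k)

theorem gasharovRelations_gx : GasharovRelations α (gx k α) where
  x00 := Ideal.Quotient.eq_zero_iff_mem.2 (Ideal.subset_span (by simp))
  x11 := Ideal.Quotient.eq_zero_iff_mem.2 (Ideal.subset_span (by simp))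
  x44 := Ideal.Quotient.eq_zero_iff_mem.2 (Ideal.subset_span (by simp))
  x23 := Ideal.Quotient.eq_zero_iff_mem.2 (Ideal.subset_span (by simp))
  x24 := Ideal.Quotient.eq_zero_iff_mem.2 (Ideal.subset_span (by simp))
  x34 := Ideal.Quotient.eq_zero_iff_mem.2 (Ideal.subset_span (by simp))
  x03 := Ideal.Quotient.eq_zero_iff_mem.2 (Ideal.subset_span (by simp))
  x02 := Ideal.Quotient.eq_zero_iff_mem.2 (Ideal.subset_span (by simp))
  x22 := Ideal.Quotient.eq_zero_iff_mem.2 (Ideal.subset_span (by simp))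
  x33 := Ideal.Quotient.eq_zero_iff_mem.2 (Ideal.subset_span (by simp))

theorem adjoin_range_gx : Algebra.adjoin k (Set.range (gx k α)) = ⊤ := by
  have h : Set.range (gx k α) =
      Ideal.Quotient.mkₐ k (gasharovIdeal k α) '' Set.range MvPolynomial.X := by
    rw [← Set.range_comp]
    rfl
  rw [h, ← AlgHom.map_adjoin, MvPolynomial.adjoin_range_X, Algebra.map_top, AlgHom.range_eq_top]
  exact Ideal.Quotient.mkₐ_surjective k _

variable {k α}

theorem GasharovRelations.gasharovIdeal_le_ker {A : Type*} [CommRing A] [Algebra k A]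
    {x : Fin 5 → A} (hx : GasharovRelations α x) :
    gasharovIdeal k α ≤ RingHom.ker (MvPolynomial.aeval (R := k) x) := by
  rw [gasharovIdeal, Ideal.span_le]
  rintro p (rfl | rfl | rfl | rfl | rfl | rfl | rfl | rfl | rfl | rfl) <;>
    rw [SetLike.mem_coe, RingHom.mem_ker] <;>
    simp only [map_add, map_sub, map_mul, map_pow, MvPolynomial.aeval_X, MvPolynomial.aeval_C]
  exacts [hx.x00, hx.x11, hx.x44, hx.x23, hx.x24, hx.x34, hx.x03, hx.x02, hx.x22, hx.x33]

/-- The universal property of the Gasharov–Peeva algebra. -/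
noncomputable def gasharovLift {A : Type*} [CommRing A] [Algebra k A] {x : Fin 5 → A}
    (hx : GasharovRelations α x) : gasharovRing k α →ₐ[k] A :=
  Ideal.Quotient.liftₐ _ (MvPolynomial.aeval x) hx.gasharovIdeal_le_ker

theorem gasharovLift_gx {A : Type*} [CommRing A] [Algebra k A] {x : Fin 5 → A}
    (hx : GasharovRelations α x) (i : Fin 5) : gasharovLift hx (gx k α i) = x i :=
  MvPolynomial.aeval_X x i

theorem map_dualQuadric {A B F : Type*} [CommRing A] [CommRing B] [FunLike F A B]
    [MulHomClass F A B] (f : F) (x : Fin 5 → A) (l : Fin 5) :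
    f (dualQuadric x l) = dualQuadric (fun i ↦ f (x i)) l := by
  fin_cases l <;> exact map_mul f _ _

variable (k α)

theorem gasharovLift_var_bijective :
    Function.Bijective (gasharovLift (GasharovRelations.var (α := α))) := by
  set F := gasharovLift (GasharovRelations.var (α := α))
  have hFx : ∀ i, F (gx k α i) = var (gasharovForm α) i := gasharovLift_gx .var
  have hF : Function.LeftInverse F
      (linearLift (gx k α) (dualQuadric (gx k α)) (gx k α 0 * gx k α 1 * gx k α 4)) := by
    refine apply_linearLift hFx (fun l ↦ ?_) ?_
    · simp only [map_dualQuadric, hFx, dualQuadric_var]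
    · simp only [map_mul, hFx, socle_var]
  have hx := gasharovRelations_gx k α
  have hsurj := linearLift_surjective (adjoin_range_gx k α) <|
    linearLift_mul_var hx.mul_eq_sum_dualQuadric hx.dualQuadric_mul hx.socle_mul
  exact ⟨(hF.rightInverse_of_surjective hsurj).injective, hF.surjective⟩

/-- The Gasharov–Peeva algebra in coordinates. -/
noncomputable def gasharovEquiv : gasharovRing k α ≃ₐ[k] CubicAlgebra (gasharovForm α) :=
  .ofBijective _ (gasharovLift_var_bijective k α)

theorem gasharovEquiv_gx (i : Fin 5) : gasharovEquiv k α (gx k α i) = var (gasharovForm α) i :=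
  gasharovLift_gx .var i

end Equiv

section Structure

open CubicAlgebra

variable (k : Type u) [Field k] (α : k)

instance : Module.Finite k (gasharovRing k α) :=
  .equiv (gasharovEquiv k α).symm.toLinearEquiv

instance : IsLocalRing (gasharovRing k α) :=
  (gasharovEquiv k α).symm.toRingEquiv.isLocalRing

theorem gasharovRing_selfinjective : Module.Injective (gasharovRing k α) (gasharovRing k α) := by
  refine injective_of_frobenius_form (φ := cub ∘ₗ (gasharovEquiv k α).toLinearMap) fun a ha ↦ ?_
  refine (map_eq_zero_iff _ (gasharovEquiv k α).injective).1
    (eq_zero_of_forall_cub_mul_eq_zero fun b ↦ ?_)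
  obtain ⟨b, rfl⟩ := (gasharovEquiv k α).surjective b
  rw [← map_mul]
  exact ha b

variable {k α} in
theorem mem_maximalIdeal_gasharovRing_iff {a : gasharovRing k α} :
    a ∈ maximalIdeal (gasharovRing k α) ↔ const (gasharovEquiv k α a) = 0 := by
  rw [← mem_maximalIdeal_iff, IsLocalRing.mem_maximalIdeal, IsLocalRing.mem_maximalIdeal,
    mem_nonunits_iff, mem_nonunits_iff, isUnit_map_iff]

theorem gx_mem_maximalIdeal (i : Fin 5) : gx k α i ∈ maximalIdeal (gasharovRing k α) := by
  rw [mem_maximalIdeal_gasharovRing_iff, gasharovEquiv_gx, var, ofLin, const_mk]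

theorem exists_socle_generator : ∃ s : gasharovRing k α,
    ∀ a, s * a = 0 ↔ a ∈ maximalIdeal (gasharovRing k α) := by
  refine ⟨(gasharovEquiv k α).symm (mk _ 0 0 0 1), fun a ↦ ?_⟩
  rw [← map_eq_zero_iff _ (gasharovEquiv k α).injective, map_mul, AlgEquiv.apply_symm_apply,
    mk_cub_mul_eq_zero, mem_maximalIdeal_iff, mem_maximalIdeal_gasharovRing_iff]

variable {k α}

theorem gx_mul_eq_zero_iff_dvd {i : Fin 5}
    (h : LinearMap.ker ((gasharovForm α).toLin (Pi.single i 1)) = k ∙ Pi.single i 1)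
    {a : gasharovRing k α} : gx k α i * a = 0 ↔ gx k α i ∣ a := by
  rw [← map_eq_zero_iff _ (gasharovEquiv k α).injective, ← map_dvd_iff (gasharovEquiv k α),
    map_mul, gasharovEquiv_gx]
  exact ofLin_mul_eq_zero_iff_dvd (by simp) h

theorem ker_gasharovForm_single_zero :
    LinearMap.ker ((gasharovForm α).toLin (Pi.single 0 1)) = k ∙ Pi.single 0 1 := by
  ext v
  rw [LinearMap.mem_ker, Submodule.mem_span_singleton]
  constructor
  · intro h
    have hv (j : Fin 5) := congr($h (Pi.single j 1))
    have h1 : v 4 = 0 := by simpa [gasharovForm_apply] using hv 1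
    have h2 : v 2 = 0 := by simpa [gasharovForm_apply] using hv 2
    have h3 : v 3 = 0 := by simpa [gasharovForm_apply] using hv 3
    have h4 : v 1 = 0 := by simpa [gasharovForm_apply] using hv 4
    refine ⟨v 0, ?_⟩
    ext i
    fin_cases i <;> simp [*]
  · rintro ⟨c, rfl⟩
    ext w
    simp [gasharovForm_apply]

theorem ker_gasharovForm_single_one (hα : α ≠ 0) :
    LinearMap.ker ((gasharovForm α).toLin (Pi.single 1 1)) = k ∙ Pi.single 1 1 := by
  ext v
  rw [LinearMap.mem_ker, Submodule.mem_span_singleton]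
  constructor
  · intro h
    have hv (j : Fin 5) := congr($h (Pi.single j 1))
    have h0 : v 4 = 0 := by simpa [gasharovForm_apply] using hv 0
    have h2 : v 2 = 0 := by simpa [gasharovForm_apply, hα] using hv 2
    have h3 : v 3 = 0 := by simpa [gasharovForm_apply] using hv 3
    have h4 : v 0 = 0 := by simpa [gasharovForm_apply] using hv 4
    refine ⟨v 1, ?_⟩
    ext i
    fin_cases i <;> simp [*]
  · rintro ⟨c, rfl⟩
    ext w
    simp [gasharovForm_apply]

end Structure

section Complex

variable {k : Type u} [Field k] {α : k}

theorem gasharovD_exact (hα : α ≠ 0) (n : ℤ) :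
    Function.Exact (gasharovD k α (n + 1)) (gasharovD k α n) := by
  refine exact_toLin'_of_annihilator_eq (gx_mul_eq_zero_iff_dvd ker_gasharovForm_single_zero)
    (gx_mul_eq_zero_iff_dvd (ker_gasharovForm_single_one hα)) ?_
  rw [zpow_add_one₀ hα, map_mul]
  linear_combination algebraMap k (gasharovRing k α) (α ^ n) * (gasharovRelations_gx k α).x02 +
    (gasharovRelations_gx k α).x03

theorem gasharovD_apply_mem_maximalIdeal (n : ℤ) (x : Fin 2 → gasharovRing k α) (i : Fin 2) :
    gasharovD k α n x i ∈ maximalIdeal (gasharovRing k α) := by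
  have hgx (j : Fin 5) := gx_mem_maximalIdeal k α j
  rw [gasharovD, toLin'_upperTriangular_apply]
  fin_cases i
  · exact add_mem (Ideal.mul_mem_right _ _ (hgx 0))
      (Ideal.mul_mem_right _ _ (add_mem (Ideal.mul_mem_left _ _ (hgx 2)) (hgx 3)))
  · exact Ideal.mul_mem_right _ _ (hgx 1)

theorem isMinimalCover_rangeRestrict_gasharovD (hα : α ≠ 0) (n : ℤ) :
    IsMinimalCover (gasharovD k α n).rangeRestrict where
  surjective := LinearMap.surjective_rangeRestrict _
  ker_le := by
    rw [LinearMap.ker_rangeRestrict, (gasharovD_exact hα n).linearMap_ker_eq]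
    rintro _ ⟨x, rfl⟩
    exact (mem_smul_top_iff_apply_mem _).2 (gasharovD_apply_mem_maximalIdeal _ x)

/-- The right half of the complex `d`, as a minimal free resolution of `Im d_0`. -/
noncomputable def gasharovRes (hα : α ≠ 0) :
    MinFreeRes (gasharovRing k α) (LinearMap.range (gasharovD k α 0)) where
  b _ := 2
  d n := gasharovD k α (n + 1 : ℕ)
  aug := (gasharovD k α 0).rangeRestrict
  aug_surjective := LinearMap.surjective_rangeRestrict _
  exact_zero := LinearMap.exact_iff.2 <| by
    simpa using (gasharovD_exact hα 0).linearMap_ker_eq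
  exact_succ n := by
    rw [Nat.cast_succ (n + 1)]
    exact gasharovD_exact hα _
  minimal n := gasharovD_apply_mem_maximalIdeal (n + 1 : ℕ)

theorem not_subsingleton_range_gasharovD (n : ℤ) :
    ¬ Subsingleton (LinearMap.range (gasharovD k α n)) := by
  rw [Submodule.subsingleton_iff_eq_bot, LinearMap.range_eq_bot]
  intro h
  have h0 : gx k α 0 = 0 := by
    simpa [gasharovD, toLin'_upperTriangular_apply] using congr($h ![1, 0] 0)
  simpa [gasharovEquiv_gx, CubicAlgebra.var, CubicAlgebra.ofLin]
    using congr(CubicAlgebra.lin (gasharovEquiv k α $h0))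

theorem smul_range_gasharovD_eq_zero {s : gasharovRing k α}
    (hs : ∀ a, s * a = 0 ↔ a ∈ maximalIdeal (gasharovRing k α)) (n : ℤ)
    (x : LinearMap.range (gasharovD k α n)) : s • x = 0 := by
  obtain ⟨_, y, rfl⟩ := x
  ext i
  exact (hs _).2 (gasharovD_apply_mem_maximalIdeal n y i)

theorem complexity_range_gasharovD_zero (hα : α ≠ 0) :
    complexity (gasharovRing k α) (LinearMap.range (gasharovD k α 0)) = 1 := by
  refine le_antisymm (complexity_le (hasComplexityLE_one_of_b_le (gasharovRes hα) fun _ ↦ le_rfl))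
    (Order.one_le_iff_ne_zero.2 fun h ↦ ?_)
  obtain ⟨s, hs⟩ := exists_socle_generator k α
  have := (free_and_finite_of_complexity_eq_zero hs h).1
  exact not_subsingleton_range_gasharovD 0
    (subsingleton_of_forall_smul_eq_zero hs (smul_range_gasharovD_eq_zero hs 0))

theorem IsSyzygyOf.nonempty_equiv_range_gasharovD (hα : α ≠ 0) {S : Type u} [AddCommGroup S]
    [Module (gasharovRing k α) S] {n : ℕ}
    (h : IsSyzygyOf (gasharovRing k α) (LinearMap.range (gasharovD k α 0)) S n) :
    Nonempty (S ≃ₗ[gasharovRing k α] LinearMap.range (gasharovD k α n)) := by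
  match n, h with
  | 0, h => exact h
  | 1, ⟨R, ⟨e⟩⟩ =>
    obtain ⟨e'⟩ := R.nonempty_ker_aug_equiv (gasharovRes hα)
    rw [(gasharovRes hα).exact_zero.linearMap_ker_eq] at e'
    exact ⟨e.trans e'⟩
  | n + 2, ⟨R, ⟨e⟩⟩ =>
    obtain ⟨e'⟩ := R.nonempty_range_d_equiv (gasharovRes hα) (n + 1)
    rw [← (R.exact_succ n).linearMap_ker_eq] at e'
    exact ⟨e.trans e'⟩

end Complex

section Obstruction

open CubicAlgebra

variable {k : Type u} [Field k] {α : k}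

theorem lin_gasharovEquiv_of_mem_contentIdeal {n : ℤ} {a : gasharovRing k α}
    (ha : a ∈ contentIdeal (LinearMap.range (gasharovD k α n))) :
    lin (gasharovEquiv k α a) 2 = α ^ n * lin (gasharovEquiv k α a) 3 := by
  rw [gasharovD, contentIdeal_range_toLin'] at ha
  have h := Ideal.mem_map_of_mem (gasharovEquiv k α) ha
  rw [Ideal.map_span, ← Set.range_comp] at h
  suffices lin (gasharovEquiv k α a) ∈ LinearMap.ker
      (LinearMap.proj 2 - α ^ n • LinearMap.proj 3 : Module.Dual k (Fin 5 → k)) by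
    simpa [sub_eq_zero] using this
  refine (const_eq_zero_and_lin_mem_of_mem_span ?_ h).2
  rintro _ ⟨⟨i, j⟩, rfl⟩
  fin_cases i <;> fin_cases j <;>
    simp [gasharovEquiv_gx, ← Algebra.smul_def, var, ofLin]

theorem zpow_eq_zpow_of_range_gasharovD_equiv (hα : α ≠ 0) {i j : ℤ}
    (e : LinearMap.range (gasharovD k α i) ≃ₗ[gasharovRing k α] LinearMap.range (gasharovD k α j)) :
    α ^ i = α ^ j := by
  have hcontent : contentIdeal (LinearMap.range (gasharovD k α (i + 1))) =
      contentIdeal (LinearMap.range (gasharovD k α (j + 1))) := by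
    rw [← (gasharovD_exact hα i).linearMap_ker_eq, ← (gasharovD_exact hα j).linearMap_ker_eq]
    simpa only [LinearMap.ker_rangeRestrict] using
      (isMinimalCover_rangeRestrict_gasharovD hα i).contentIdeal_ker_eq
        (isMinimalCover_rangeRestrict_gasharovD hα j) e
  have hmem : algebraMap k (gasharovRing k α) (α ^ (i + 1)) * gx k α 2 + gx k α 3 ∈
      contentIdeal (LinearMap.range (gasharovD k α (i + 1))) := by
    rw [gasharovD, contentIdeal_range_toLin']
    exact Ideal.subset_span ⟨(0, 1), rfl⟩
  have hlin := lin_gasharovEquiv_of_mem_contentIdeal (hcontent ▸ hmem)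
  refine mul_right_cancel₀ hα ?_
  simpa [gasharovEquiv_gx, ← Algebra.smul_def, var, ofLin, zpow_add_one₀ hα] using hlin

theorem not_hasFreeRedCx_range_gasharovD_zero (hα : α ≠ 0) (hord : ∀ m : ℕ, 0 < m → α ^ m ≠ 1) :
    ¬ HasFreeRedCx (gasharovRing k α) (LinearMap.range (gasharovD k α 0)) := by
  intro h
  obtain ⟨s, hs⟩ := exists_socle_generator k α
  obtain ⟨K, S, n, f, g, _, _, hsyz, hses⟩ := h.exists_ses hs (complexity_range_gasharovD_zero hα)
  obtain ⟨e⟩ := hsyz.nonempty_equiv_range_gasharovD hα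
  have hcover : IsMinimalCover g := hses.isMinimalCover hs (smul_range_gasharovD_eq_zero hs 0)
  obtain ⟨e'⟩ := hcover.nonempty_ker_equiv (isMinimalCover_rangeRestrict_gasharovD hα n) e
  rw [LinearMap.ker_rangeRestrict, hses.2.1.linearMap_ker_eq,
    (gasharovD_exact hα n).linearMap_ker_eq] at e'
  have hpow := zpow_eq_zpow_of_range_gasharovD_equiv hα
    ((LinearEquiv.ofInjective f hses.1).trans e')
  rw [zpow_zero, ← Nat.cast_succ, zpow_natCast] at hpow
  exact hord (n + 1) n.succ_pos hpow.symm

end Obstruction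

end Gasharov

end ComplexityTest

/-- **Example (Gasharov–Peeva)**: let `k` be a field, `α ∈ k` nonzero, and
`A = k[X_1, …, X_5]/𝔞` the Gasharov–Peeva algebra. Then `A` is a local Gorenstein
(selfinjective) finite-dimensional `k`-algebra, the doubly infinite complex
`⋯ → A² → A² → ⋯` with differentials `d_n = (x_1, α^n x_3 + x_4; 0, x_2)` is exact,
and the module `M = Im d_0` has complexity one. Moreover, if `α` has infinite
multiplicative order in `k`, then `M` does not have reducible complexity. -/
theorem gasharov_example (k : Type u) [Field k] (α : k) (hα : α ≠ 0) :
    ∃ _ : IsLocalRing (gasharovRing k α),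
      Module.Finite k (gasharovRing k α) ∧
      Module.Injective (gasharovRing k α) (gasharovRing k α) ∧
      (∀ n : ℤ, Function.Exact (gasharovD k α (n + 1)) (gasharovD k α n)) ∧
      complexity (gasharovRing k α) ↥(LinearMap.range (gasharovD k α 0)) = 1 ∧
      ((∀ m : ℕ, 0 < m → α ^ m ≠ 1) →
        ¬ HasRedCx (gasharovRing k α) ↥(LinearMap.range (gasharovD k α 0))) := by
  exact ⟨inferInstance, inferInstance, gasharovRing_selfinjective k α, gasharovD_exact hα,
    complexity_range_gasharovD_zero hα, fun hord h ↦
      not_hasFreeRedCx_range_gasharovD_zero hα hord (HasRedCxCat.hasFreeRedCxCat_s15 h)⟩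
end
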